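/- arXiv:math/9403211 — 4 statements merged into one kernel-verified Lean document; each statement's English description precedes it below -/
import Mathlib

section
/- Let $L$ be a Banach limit on $\ell^\infty$, and for $\ell \in \mathbb{N}$ let $\lambda_\ell \in \ell^\infty$ be the $\pm 1$ sequence whose $n$-th entry is $+1$ if $\lceil n/2^{\ell-1} \rceil$ is odd and $-1$ if it is even (so $\lambda_1 = (1,-1,1,-1,\ldots)$, $\lambda_2 = (1,1,-1,-1,\ldots)$, etc.). Then for every $x \in \ell^\infty$ with $\|x\|_\infty \leq 1$, denoting by $\lambda_\ell\, x$ the pointwise product, one has $\sum_{\ell=1}^\infty |L(\lambda_\ell\, x)|^2 \leq 1$; in particular $L(\lambda_\ell\, x) \to 0$ as $\ell \to \infty$. -/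
open scoped ENNReal

open Filter

/-!
A norm-one functional with `L 1 = 1` is positive, so `(u, v) ↦ L (u * v)` is a positive
semidefinite form on `ℓ^∞`. The Rademacher sequences `r i` are orthonormal for it: `r i * r i = 1`,
and for `i < j` translation by `2 ^ j` fixes `r i` and changes the sign of `r j`, so that shift
invariance gives `L (r i * r j) = -L (r i * r j)`. Bessel's inequality then bounds
`∑ |L (r i * x)|²` by `L (x * x)`.
-/

section Bessel

theorem isPosSemidef_mul_compr₂ {R A : Type*} [CommSemiring R] [LE R] [CommSemiring A]
    [Algebra R A] {L : A →ₗ[R] R} (hL : ∀ a, 0 ≤ L (a * a)) :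
    LinearMap.BilinForm.IsPosSemidef ((LinearMap.mul R A).compr₂ L) where
  eq a b := congrArg L (mul_comm a b)
  nonneg a := hL a

theorem summable_and_tsum_sq_abs_le_of_isPosSemidef {ι V : Type*} [DecidableEq ι]
    [AddCommGroup V] [Module ℝ V] {B : LinearMap.BilinForm ℝ V} (hB : B.IsPosSemidef) {e : ι → V}
    (he : ∀ i j, B (e i) (e j) = if i = j then 1 else 0) (x : V) :
    Summable (fun i => |B (e i) x| ^ 2) ∧ ∑' i, |B (e i) x| ^ 2 ≤ B x x := by
  let core : PreInnerProductSpace.Core ℝ V :=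
    { inner := fun u v => B u v
      conj_inner_symm := fun u v => hB.eq v u
      re_inner_nonneg := hB.nonneg
      add_left := fun u v w => by simp
      smul_left := fun u v r => by simp }
  let : SeminormedAddCommGroup V := InnerProductSpace.Core.toSeminormedAddCommGroup (𝕜 := ℝ)
  let : InnerProductSpace ℝ V := InnerProductSpace.ofCore core
  have orthonormal_e : Orthonormal ℝ e := orthonormal_iff_ite.2 he
  have norm_sq_x : ‖x‖ ^ 2 = B x x := (real_inner_self_eq_norm_sq x).symm
  exact ⟨orthonormal_e.inner_products_summable x,
    (orthonormal_e.tsum_inner_products_le x).trans_eq norm_sq_x⟩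

end Bessel

section NormOneFunctional

theorem map_mul_self_le_one {A : Type*} [NonUnitalSeminormedRing A] [NormedSpace ℝ A]
    {L : A →L[ℝ] ℝ} (hL : ‖L‖ ≤ 1) {x : A} (hx : ‖x‖ ≤ 1) : L (x * x) ≤ 1 :=
  calc L (x * x) ≤ ‖L (x * x)‖ := Real.le_norm_self _
    _ ≤ ‖L‖ * (‖x‖ * ‖x‖) := L.le_opNorm_of_le (norm_mul_le x x)
    _ ≤ 1 := mul_le_one₀ hL (by positivity) (mul_le_one₀ hx (norm_nonneg x) hx)

variable {ι : Type*}

theorem norm_smul_one_sub_le_of_nonneg {u : lp (fun _ : ι => ℝ) ∞} (hu : ∀ i, 0 ≤ u i) :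
    ‖‖u‖ • (1 : lp (fun _ : ι => ℝ) ∞) - u‖ ≤ ‖u‖ := by
  refine lp.norm_le_of_forall_le (norm_nonneg u) fun i => ?_
  have hle : u i ≤ ‖u‖ := (le_abs_self _).trans (lp.norm_apply_le_norm ENNReal.top_ne_zero u i)
  have happly : (‖u‖ • (1 : lp (fun _ : ι => ℝ) ∞) - u) i = ‖u‖ - u i :=
    congrArg (· - u i) (mul_one ‖u‖)
  rw [happly, Real.norm_of_nonneg (sub_nonneg.2 hle)]
  exact sub_le_self _ (hu i)

theorem map_nonneg_of_map_one_of_norm_le_one {L : lp (fun _ : ι => ℝ) ∞ →L[ℝ] ℝ}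
    (hL1 : L 1 = 1) (hL : ‖L‖ ≤ 1) {u : lp (fun _ : ι => ℝ) ∞} (hu : ∀ i, 0 ≤ u i) : 0 ≤ L u := by
  have hbound : ‖u‖ - L u ≤ ‖u‖ :=
    calc ‖u‖ - L u = L (‖u‖ • 1 - u) := by rw [map_sub, map_smul, hL1, smul_eq_mul, mul_one]
      _ ≤ ‖L (‖u‖ • 1 - u)‖ := Real.le_norm_self _
      _ ≤ ‖‖u‖ • (1 : lp (fun _ : ι => ℝ) ∞) - u‖ := L.le_of_opNorm_le hL _ |>.trans_eq (one_mul _)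
      _ ≤ ‖u‖ := norm_smul_one_sub_le_of_nonneg hu
  linarith

end NormOneFunctional

section ShiftInvariance

variable {E : Type*} [NormedAddCommGroup E]

theorem memℓp_infty_comp {ι κ : Type*} {f : ι → E} (hf : Memℓp f ∞) (φ : κ → ι) :
    Memℓp (f ∘ φ) ∞ :=
  memℓp_infty (hf.bddAbove.mono (Set.range_comp_subset_range φ fun i => ‖f i‖))

theorem map_eq_of_forall_apply_eq_apply_add {β : Type*} {L : lp (fun _ : ℕ => E) ∞ → β}
    (hshift : ∀ u v : lp (fun _ : ℕ => E) ∞, (∀ n, v n = u (n + 1)) → L v = L u) (k : ℕ)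
    {u v : lp (fun _ : ℕ => E) ∞} (huv : ∀ n, v n = u (n + k)) : L v = L u := by
  induction k generalizing v with
  | zero => exact congrArg L (lp.ext (funext huv))
  | succ k ih =>
    let w : lp (fun _ : ℕ => E) ∞ := ⟨_, memℓp_infty_comp (lp.memℓp u) (· + k)⟩
    have hvw : L v = L w := hshift w v fun n =>
      (huv n).trans (congrArg u (by ring))
    exact hvw.trans (ih fun _ => rfl)

theorem map_eq_zero_of_antiperiodic {F G : Type*} [AddCommGroup G] [IsAddTorsionFree G]
    [FunLike F (lp (fun _ : ℕ => E) ∞) G] [AddMonoidHomClass F (lp (fun _ : ℕ => E) ∞) G] {L : F}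
    (hshift : ∀ u v : lp (fun _ : ℕ => E) ∞, (∀ n, v n = u (n + 1)) → L v = L u)
    {u : lp (fun _ : ℕ => E) ∞} {c : ℕ} (hu : Function.Antiperiodic u c) : L u = 0 := by
  have hneg : L (-u) = L u :=
    map_eq_of_forall_apply_eq_apply_add hshift c fun n => (hu n).symm
  rwa [map_neg, neg_eq_self] at hneg

end ShiftInvariance

section Rademacher

/-- The Rademacher sequences `λ_{i+1}`, indexed from `0`: the sign of `rademacher i` is constant on
the blocks `[k * 2 ^ i, (k + 1) * 2 ^ i)` and equals `(-1) ^ k` there. -/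
noncomputable def rademacher (i : ℕ) : lp (fun _ : ℕ => ℝ) ∞ :=
  ⟨fun m => (-1) ^ (m / 2 ^ i), memℓp_infty ⟨1, by rintro _ ⟨m, rfl⟩; simp⟩⟩

theorem rademacher_apply (i m : ℕ) : rademacher i m = (-1) ^ (m / 2 ^ i) := rfl

theorem rademacher_apply_eq_ite (i m : ℕ) :
    rademacher i m = if (m / 2 ^ i) % 2 = 0 then 1 else -1 := by
  simp only [rademacher_apply, neg_one_pow_eq_ite, Nat.even_iff]

theorem rademacher_mul_self (i : ℕ) : rademacher i * rademacher i = 1 := by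
  ext m
  simp [lp.infty_coeFn_mul, lp.infty_coeFn_one, rademacher_apply, ← mul_pow]

theorem rademacher_antiperiodic (i : ℕ) : Function.Antiperiodic (rademacher i) (2 ^ i) :=
  fun m => by
    simp only [rademacher_apply, Nat.add_div_right m (Nat.two_pow_pos i), pow_succ, mul_neg_one]

theorem rademacher_periodic {i j : ℕ} (hij : i < j) :
    Function.Periodic (rademacher i) (2 ^ j) := by
  obtain ⟨d, rfl⟩ := Nat.exists_eq_add_of_lt hij
  have hperiod : 2 ^ (i + d + 1) = 2 ^ d * (2 * 2 ^ i) := by ring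
  rw [hperiod]
  exact (rademacher_antiperiodic i).nat_even_mul_periodic (2 ^ d)

theorem rademacher_mul_antiperiodic {i j : ℕ} (hij : i < j) :
    Function.Antiperiodic (rademacher i * rademacher j) (2 ^ j) := fun m => by
  simp only [lp.infty_coeFn_mul, Pi.mul_apply, rademacher_periodic hij m,
    rademacher_antiperiodic j m, mul_neg]

theorem map_rademacher_mul_rademacher {F : Type*} [FunLike F (lp (fun _ : ℕ => ℝ) ∞) ℝ]
    [AddMonoidHomClass F (lp (fun _ : ℕ => ℝ) ∞) ℝ] {L : F} (hL1 : L 1 = 1)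
    (hshift : ∀ u v : lp (fun _ : ℕ => ℝ) ∞, (∀ n, v n = u (n + 1)) → L v = L u) (i j : ℕ) :
    L (rademacher i * rademacher j) = if i = j then 1 else 0 := by
  rcases lt_trichotomy i j with hij | rfl | hji
  · rw [if_neg hij.ne, map_eq_zero_of_antiperiodic hshift (rademacher_mul_antiperiodic hij)]
  · rw [if_pos rfl, rademacher_mul_self, hL1]
  · rw [if_neg hji.ne', mul_comm,
      map_eq_zero_of_antiperiodic hshift (rademacher_mul_antiperiodic hji)]

end Rademacher

theorem tendsto_zero_of_tendsto_sq_abs {α : Type*} {l : Filter α} {f : α → ℝ}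
    (hf : Tendsto (fun a => |f a| ^ 2) l (nhds 0)) : Tendsto f l (nhds 0) := by
  have habs := hf.sqrt
  simp only [Real.sqrt_sq (abs_nonneg _), Real.sqrt_zero] at habs
  exact (tendsto_zero_iff_abs_tendsto_zero f).2 habs

theorem banachLimit_rademacher_sq_summable_general
    (L : lp (fun _ : ℕ => ℝ) ∞ →L[ℝ] ℝ)
    (hL1 : L 1 = 1) (hLnorm : ‖L‖ = 1)
    (hshift : ∀ u v : lp (fun _ : ℕ => ℝ) ∞, (∀ n, v n = u (n + 1)) → L v = L u)
    (x : lp (fun _ : ℕ => ℝ) ∞)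
    (lam : ℕ → lp (fun _ : ℕ => ℝ) ∞)
    (hlam : ∀ (ℓ : ℕ) (m : ℕ),
      (lam ℓ) m = (if (m / 2 ^ ℓ) % 2 = 0 then (1 : ℝ) else -1) * x m) :
    Summable (fun ℓ : ℕ => |L (lam ℓ)| ^ 2) ∧
    (∑' ℓ : ℕ, |L (lam ℓ)| ^ 2) ≤ L (x * x) ∧
    Tendsto (fun ℓ : ℕ => L (lam ℓ)) atTop (nhds 0) := by
  obtain rfl : lam = fun ℓ => rademacher ℓ * x := by
    ext ℓ m
    rw [hlam, lp.infty_coeFn_mul, Pi.mul_apply, rademacher_apply_eq_ite]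
  have map_sq_nonneg (a : lp (fun _ : ℕ => ℝ) ∞) : 0 ≤ L (a * a) :=
    map_nonneg_of_map_one_of_norm_le_one hL1 hLnorm.le fun m => by
      rw [lp.infty_coeFn_mul]; exact mul_self_nonneg (a m)
  obtain ⟨hsum, htsum⟩ := summable_and_tsum_sq_abs_le_of_isPosSemidef
    (isPosSemidef_mul_compr₂ (L := L.toLinearMap) map_sq_nonneg)
    (map_rademacher_mul_rademacher hL1 hshift) x
  exact ⟨hsum, htsum, tendsto_zero_of_tendsto_sq_abs hsum.tendsto_atTop_zero⟩

/-- For a Banach limit `L` on `ℓ^∞` and the Rademacher-like `±1` sequences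
`λ_ℓ` (`λ₁ = (1,-1,1,-1,…)`, `λ₂ = (1,1,-1,-1,…)`, …; the `n`-th entry of
`λ_ℓ` is `+1` iff `⌈n/2^{ℓ-1}⌉` is odd, i.e. the 0-based entry at `m` of
`λ_{ℓ+1}` is `+1` iff `(m / 2^ℓ) % 2 = 0`), and every `x ∈ ℓ^∞` with
`‖x‖ ≤ 1`, one has `∑_{ℓ=1}^∞ |L(λ_ℓ x)|² ≤ 1`; in particular
`L(λ_ℓ x) → 0`.  Here `lam ℓ` denotes the pointwise product `λ_{ℓ+1}·x`. -/
theorem banachLimit_rademacher_sq_summable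
    (L : lp (fun _ : ℕ => ℝ) ∞ →L[ℝ] ℝ)
    (hL1 : L 1 = 1) (hLnorm : ‖L‖ = 1)
    (hshift : ∀ u v : lp (fun _ : ℕ => ℝ) ∞, (∀ n, v n = u (n + 1)) → L v = L u)
    (x : lp (fun _ : ℕ => ℝ) ∞) (hx : ‖x‖ ≤ 1)
    (lam : ℕ → lp (fun _ : ℕ => ℝ) ∞)
    (hlam : ∀ (ℓ : ℕ) (m : ℕ),
      (lam ℓ) m = (if (m / 2 ^ ℓ) % 2 = 0 then (1 : ℝ) else -1) * x m) :
    Summable (fun ℓ : ℕ => |L (lam ℓ)| ^ 2) ∧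
    (∑' ℓ : ℕ, |L (lam ℓ)| ^ 2) ≤ 1 ∧
    Tendsto (fun ℓ : ℕ => L (lam ℓ)) atTop (nhds 0) := by
  obtain ⟨hsum, htsum, htends⟩ :=
    banachLimit_rademacher_sq_summable_general L hL1 hLnorm hshift x lam hlam
  exact ⟨hsum, htsum.trans (map_mul_self_le_one hLnorm.le hx), htends⟩
end

section
/- Let $X$ be an infinite-dimensional Banach space. Then there exist $x'_1, x'_2, \ldots$ in the dual $X'$ with $\|x'_n\| = 1$ for all $n$ such that $x'_n \to 0$ in the weak* topology, i.e. $x'_n(x) \to 0$ for every $x \in X$. -/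
open Filter

/-!
By Riesz's lemma the dual contains a bounded sequence of functionals at mutual distance at least
one. If some subsequence converges pointwise, its successive differences are weak* null and bounded
below in norm. Otherwise Rosenthal's dichotomy (here obtained from the Galvin–Nash-Williams
partition theorem) provides a subsequence `u` on which the norm is equivalent to the `ℓ¹`-norm of
the coefficients, and the argument of Hagler and Johnson applies. Among the block sequences `w` of
`u`, choose one minimizing `sup_{‖x‖ ≤ 1} limsup |w n x|` hereditarily. If the minimum is zero, `w`
is weak* null and bounded below. If it is larger than some `δ > 0`, minimality prevents averages of
`w` with arbitrary signs from becoming small, and this produces a Rademacher-like sequence `x` in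
the unit ball: for every sign pattern `ε` some functional `w n` satisfies `δ ≤ ε j * w n (x j)` for
all `j < k`. Averaging these functionals against the coordinates `ε j` and using Bessel's inequality
in `L²({-1, 1}ᵏ)` gives functionals `g j` with `δ ≤ g j (x j)` whose values at each point are
square summable, hence null.
-/

open scoped ENNReal Topology

section Ramsey

/-- `N` is an increasing sequence each of whose terms lies in the set that `S` assigns to the
preceding term; the first term is only asked to lie in `S 0`. -/
def Follows (S : ℕ → Set ℕ) (N : ℕ → ℕ) : Prop :=
  StrictMono N ∧ N 0 ∈ S 0 ∧ ∀ i, N (i + 1) ∈ S (N i)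

/-- Acceptance in the sense of Galvin and Nash-Williams, the large sets being the members of `l`:
large sets `S q` can be prescribed so that every sequence `N` following them has a finite initial
segment which, adjoined to `s`, lies in the family `F`. -/
def Accepts (l : Filter ℕ) (F : Finset ℕ → Prop) (s : Finset ℕ) : Prop :=
  ∃ S : ℕ → Set ℕ, (∀ q, S q ∈ l) ∧
    ∀ N, Follows S N → ∃ j, F (s ∪ (Finset.range j).image N)

variable {F : Finset ℕ → Prop} {s : Finset ℕ}

lemma Accepts.of_mem {l : Filter ℕ} (h : F s) : Accepts l F s :=
  ⟨fun _ => Set.univ, fun _ => univ_mem, fun _ _ => ⟨0, by simpa using h⟩⟩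

lemma Accepts.of_eventually_insert {l : Filter ℕ} (h : ∀ᶠ n in l, Accepts l F (insert n s)) :
    Accepts l F s := by
  choose! S hSl hS using fun n (hn : Accepts l F (insert n s)) => hn
  refine ⟨fun q => {k | Accepts l F (insert k s) ∧
    ∀ n ∈ Set.Iic q, Accepts l F (insert n s) → k ∈ S n q ∧ k ∈ S n 0}, fun q => ?_, ?_⟩
  · refine h.and ((eventually_all_finite (Set.finite_Iic q)).2 fun n _ => ?_)
    by_cases hn : Accepts l F (insert n s)
    · filter_upwards [hSl n hn q, hSl n hn 0] with k hkq hk0 _ using ⟨hkq, hk0⟩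
    · exact .of_forall fun _ hn' => absurd hn' hn
  · rintro N ⟨hN, ⟨hacc, -⟩, hmem⟩
    have hfollows : Follows (S (N 0)) fun i => N (i + 1) :=
      ⟨hN.comp (strictMono_id.add_const 1), ((hmem 0).2 _ Set.self_mem_Iic hacc).2,
        fun i => ((hmem (i + 1)).2 _ (hN.monotone (Nat.zero_le _)) hacc).1⟩
    obtain ⟨j, hj⟩ := hS (N 0) hacc _ hfollows
    refine ⟨j + 1, ?_⟩
    convert hj using 1
    rw [Finset.range_add_one', Finset.image_insert, Finset.union_insert, Finset.insert_union,
      Finset.map_eq_image, Finset.image_image]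
    rfl

lemma exists_strictMono_forall_lt_mem {l : Filter ℕ} [NeBot l] (hl : l ≤ atTop) {S : ℕ → Set ℕ}
    (hS : ∀ q, S q ∈ l) :
    ∃ m : ℕ → ℕ, StrictMono m ∧ (∀ j, m j ∈ S 0) ∧ ∀ i j, i < j → m j ∈ S (m i) := by
  obtain ⟨m, hm0, hm⟩ := exists_seq_of_forall_finset_exists (· ∈ S 0)
    (fun p q => p < q ∧ q ∈ S p) fun s _ =>
      ((eventually_mem_set.2 (hS 0)).and ((eventually_all_finset s).2 fun p _ =>
        inter_mem (hl (Ioi_mem_atTop p)) (hS p))).exists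
  exact ⟨m, strictMono_nat_of_lt_succ fun j => (hm j (j + 1) j.lt_succ_self).1, hm0,
    fun i j hij => (hm i j hij).2⟩

lemma exists_strictMono_forall_follows {l : Filter ℕ} [NeBot l] (hl : l ≤ atTop)
    {S : ℕ → ℕ → Set ℕ} (hS : ∀ i q, S i q ∈ l) :
    ∃ m : ℕ → ℕ, StrictMono m ∧
      ∀ i φ, StrictMono φ → i < φ 0 → Follows (S i) (m ∘ φ) := by
  obtain ⟨m, hm, -, hmS⟩ := exists_strictMono_forall_lt_mem hl
    (S := fun q => {k | ∀ i ∈ Set.Iic q, k ∈ S i q ∧ k ∈ S i 0}) fun q =>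
      (eventually_all_finite (Set.finite_Iic q)).2 fun i _ => inter_mem (hS i q) (hS i 0)
  refine ⟨m, hm, fun i φ hφ hi => ⟨hm.comp hφ, ?_, fun j => ?_⟩⟩
  · exact (hmS i (φ 0) hi i hm.le_apply).2
  · exact (hmS (φ j) (φ (j + 1)) (hφ j.lt_succ_self) i
      ((hi.le.trans (hφ.monotone j.zero_le)).trans hm.le_apply)).1

lemma exists_strictMono_forall_not_accepts {l : Ultrafilter ℕ} (hl : (l : Filter ℕ) ≤ atTop)
    (h : ¬ Accepts l F ∅) :
    ∃ m : ℕ → ℕ, StrictMono m ∧ ∀ s : Finset ℕ, ¬ Accepts l F (s.image m) := by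
  obtain ⟨m, hm, hm0, hmS⟩ := exists_strictMono_forall_lt_mem hl
    (S := fun q => {k | ∀ s ∈ (Finset.range (q + 1)).powerset,
      ¬ Accepts l F s → ¬ Accepts l F (insert k s)}) fun q =>
      (eventually_all_finset _).2 fun s _ => by
        by_cases hs : Accepts l F s
        · exact .of_forall fun _ hs' => absurd hs hs'
        · filter_upwards [Ultrafilter.eventually_not.2 (mt Accepts.of_eventually_insert hs)]
            with k hk _ using hk
  refine ⟨m, hm, fun s => ?_⟩
  induction s using Finset.induction_on_max with
  | empty => simpa using h
  | insert b s hb ih =>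
    rw [Finset.image_insert]
    rcases s.eq_empty_or_nonempty with rfl | hne
    · exact hm0 b ∅ (by simp) h
    · refine hmS _ b (hb _ (s.max'_mem hne)) _ ?_ ih
      rw [Finset.mem_powerset, Finset.image_subset_iff]
      exact fun a ha => Finset.mem_range_succ_iff.2 (hm.monotone (s.le_max' a ha))

theorem galvin_nashWilliams_dichotomy (F : ℕ → Finset ℕ → Prop) :
    (∃ m : ℕ → ℕ, StrictMono m ∧ ∀ i φ, StrictMono φ → i < φ 0 →
      ∃ j, F i ((Finset.range j).image (m ∘ φ))) ∨
    ∃ i, ∃ m : ℕ → ℕ, StrictMono m ∧ ∀ s : Finset ℕ, ¬ F i (s.image m) := by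
  by_cases h : ∀ i, Accepts (hyperfilter ℕ) (F i) ∅
  · left
    choose S hS hF using h
    obtain ⟨m, hm, hfollows⟩ := exists_strictMono_forall_follows Nat.hyperfilter_le_atTop hS
    exact ⟨m, hm, fun i φ hφ hi => by simpa using hF i _ (hfollows i φ hφ hi)⟩
  · right
    push Not at h
    obtain ⟨i, hi⟩ := h
    obtain ⟨m, hm, hnot⟩ := exists_strictMono_forall_not_accepts Nat.hyperfilter_le_atTop hi
    exact ⟨i, m, hm, fun s => mt Accepts.of_mem (hnot s)⟩

end Ramsey

section Rosenthal

variable {α : Type*} {f : ℕ → α → ℝ} {r s : ℝ}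

/-- Along `A`, listed in increasing order, the values `f n x` are alternately above `s` and
below `r`. -/
def AlternatesOn (f : ℕ → α → ℝ) (r s : ℝ) (A : Finset ℕ) (x : α) : Prop :=
  ∀ n ∈ A, if Even (A.filter (· < n)).card then s < f n x else f n x < r

/-- Independence of the pairs of sets `{f i < r}`, `{s < f i}` in the sense of Rosenthal. -/
def RosenthalIndependent (f : ℕ → α → ℝ) (r s : ℝ) : Prop :=
  ∀ (J : Set ℕ) (k : ℕ), ∃ x, ∀ i < k, (i ∈ J → s < f i x) ∧ (i ∉ J → f i x < r)

lemma alternatesOn_image_range {ψ : ℕ → ℕ} (hψ : StrictMono ψ) {j : ℕ} {x : α} :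
    AlternatesOn f r s ((Finset.range j).image ψ) x ↔
      ∀ t < j, if Even t then s < f (ψ t) x else f (ψ t) x < r := by
  have hcard : ∀ t < j, (((Finset.range j).image ψ).filter (· < ψ t)).card = t := by
    intro t ht
    have hfilter : (Finset.range j).filter (ψ · < ψ t) = Finset.range t := by
      ext i
      simp only [Finset.mem_filter, Finset.mem_range, hψ.lt_iff_lt]
      lia
    rw [Finset.filter_image, hfilter, Finset.card_image_of_injective _ hψ.injective,
      Finset.card_range]
  simp only [AlternatesOn, Finset.forall_mem_image, Finset.mem_range]
  exact forall₂_congr fun t ht => by rw [hcard t ht]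

lemma rosenthalIndependent_of_alternatesOn {m : ℕ → ℕ} (hm : StrictMono m)
    (h : ∀ A : Finset ℕ, ∃ x, AlternatesOn f r s (A.image m) x) :
    RosenthalIndependent (fun i => f (m (3 * i + 1))) r s := by
  classical
  intro J k
  -- The middle index `3 * i + 1` of the `i`-th block is visited at an even time when `i ∈ J`
  -- (and then `3 * i + 2` follows it) and at an odd time, after `3 * i`, when `i ∉ J`.
  let φ : ℕ → ℕ := fun t => 3 * (t / 2) + t % 2 + if t / 2 ∈ J then 1 else 0
  have hφ : StrictMono φ := strictMono_nat_of_lt_succ fun t => by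
    rcases Nat.even_or_odd' t with ⟨q, rfl | rfl⟩
    · have hdiv : (2 * q + 1) / 2 = 2 * q / 2 := by lia
      simp only [φ, hdiv]
      lia
    · simp only [φ]
      split_ifs <;> lia
  obtain ⟨x, hx⟩ := h ((Finset.range (2 * k)).image φ)
  rw [Finset.image_image, alternatesOn_image_range (hm.comp hφ)] at hx
  refine ⟨x, fun i hi => ⟨fun hiJ => ?_, fun hiJ => ?_⟩⟩
  · have hφi : φ (2 * i) = 3 * i + 1 := by simp [φ, hiJ]
    simpa [hφi] using hx (2 * i) (by lia)
  · have hdiv : (2 * i + 1) / 2 = i := by lia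
    have hφi : φ (2 * i + 1) = 3 * i + 1 := by
      simp only [φ, hdiv, hiJ, if_false]
      lia
    simpa [hφi] using hx (2 * i + 1) (by lia)

lemma exists_tendsto_of_forall_not_alternatesOn {x : α}
    (hbdd : Bornology.IsBounded (Set.range fun n => f n x))
    (h : ∀ r s : ℚ, r < s → ∃ i : ℕ, ∀ φ : ℕ → ℕ, StrictMono φ → i < φ 0 →
      ∃ j, ¬ AlternatesOn f r s ((Finset.range j).image φ) x) :
    ∃ c, Tendsto (fun n => f n x) atTop (𝓝 c) := by
  refine tendsto_of_no_upcrossings (s := Set.range ((↑) : ℚ → ℝ)) Rat.denseRange_cast ?_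
    hbdd.bddAbove.isBoundedUnder_of_range hbdd.bddBelow.isBoundedUnder_of_range
  rintro _ ⟨r, rfl⟩ _ ⟨s, rfl⟩ hrs ⟨hr, hs⟩
  obtain ⟨i, hi⟩ := h r s (by exact_mod_cast hrs)
  obtain ⟨φ, hφ, hφi⟩ := extraction_forall_of_frequently
    (P := fun t n => i < n ∧ if Even t then s < f n x else f n x < r) fun t => by
      split_ifs
      · exact (hs.and_eventually (eventually_gt_atTop i)).mono fun _ => And.symm
      · exact (hr.and_eventually (eventually_gt_atTop i)).mono fun _ => And.symm
  obtain ⟨j, hj⟩ := hi φ hφ (hφi 0).1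
  exact hj ((alternatesOn_image_range hφ).2 fun t _ => (hφi t).2)

theorem exists_pointwise_tendsto_or_rosenthalIndependent
    (hbdd : ∀ x, Bornology.IsBounded (Set.range fun n => f n x)) :
    (∃ m : ℕ → ℕ, StrictMono m ∧ ∀ x, ∃ c, Tendsto (fun j => f (m j) x) atTop (𝓝 c)) ∨
    ∃ (m : ℕ → ℕ) (r s : ℝ), r < s ∧ RosenthalIndependent (f ∘ m) r s := by
  have : Nonempty {p : ℚ × ℚ // p.1 < p.2} := ⟨⟨(0, 1), one_pos⟩⟩
  obtain ⟨e, he⟩ := exists_surjective_nat {p : ℚ × ℚ // p.1 < p.2}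
  rcases galvin_nashWilliams_dichotomy fun i A =>
      ¬ ∃ x, AlternatesOn f (e i).1.1 (e i).1.2 A x with ⟨m, hm, h⟩ | ⟨i, m, hm, h⟩
  · refine .inl ⟨m, hm, fun x => exists_tendsto_of_forall_not_alternatesOn
      ((hbdd x).subset (Set.range_comp_subset_range m fun n => f n x)) fun r s hrs => ?_⟩
    obtain ⟨i, hi⟩ := he ⟨(r, s), hrs⟩
    refine ⟨i, fun φ hφ hi0 => ?_⟩
    obtain ⟨j, hj⟩ := h i φ hφ hi0
    refine ⟨j, fun halt => hj ⟨x, ?_⟩⟩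
    rw [hi, alternatesOn_image_range (hm.comp hφ)]
    exact (alternatesOn_image_range hφ).1 halt
  · refine .inr ⟨fun i => m (3 * i + 1), (e i).1.1, (e i).1.2, by exact_mod_cast (e i).2, ?_⟩
    exact rosenthalIndependent_of_alternatesOn hm fun A => not_not.1 (h A)

end Rosenthal

section WeakStarNull

variable {E : Type*} [SeminormedAddCommGroup E]

/-- The conclusion of the Josefson–Nissenzweig theorem for `E`: some sequence of norm-one
functionals is weak* null. -/
def HasNormalizedWeakStarNullSeq (𝕜 E : Type*) [RCLike 𝕜] [SeminormedAddCommGroup E]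
    [NormedSpace 𝕜 E] : Prop :=
  ∃ f : ℕ → StrongDual 𝕜 E, (∀ n, ‖f n‖ = 1) ∧ ∀ x, Tendsto (fun n => f n x) atTop (𝓝 0)

lemma tendsto_apply_zero_of_forall_closedBall [NormedSpace ℝ E] {f : ℕ → StrongDual ℝ E}
    (h : ∀ x : Metric.closedBall (0 : E) 1, Tendsto (fun n => f n x) atTop (𝓝 0)) (x : E) :
    Tendsto (fun n => f n x) atTop (𝓝 0) := by
  have hpos : 0 < ‖x‖ + 1 := by positivity
  have hmem : (‖x‖ + 1)⁻¹ • x ∈ Metric.closedBall (0 : E) 1 := by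
    rw [mem_closedBall_zero_iff, norm_smul, norm_inv, Real.norm_of_nonneg hpos.le,
      inv_mul_le_one₀ hpos]
    linarith
  simpa [mul_inv_cancel_left₀ hpos.ne'] using (h ⟨_, hmem⟩).const_mul (‖x‖ + 1)

lemma HasNormalizedWeakStarNullSeq.of_le_norm {𝕜 : Type*} [RCLike 𝕜] [NormedSpace 𝕜 E] {c : ℝ}
    (hc : 0 < c) {f : ℕ → StrongDual 𝕜 E} (hf : ∀ n, c ≤ ‖f n‖)
    (hlim : ∀ x, Tendsto (fun n => f n x) atTop (𝓝 0)) :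
    HasNormalizedWeakStarNullSeq 𝕜 E := by
  have hpos : ∀ n, 0 < ‖f n‖ := fun n => hc.trans_le (hf n)
  refine ⟨fun n => ((‖f n‖ : 𝕜)⁻¹) • f n,
    fun n => ?_, fun x => ?_⟩
  · rw [norm_smul, norm_inv, RCLike.norm_ofReal, abs_norm, inv_mul_cancel₀ (hpos n).ne']
  · refine squeeze_zero_norm (a := fun n => c⁻¹ * ‖f n x‖) (fun n => ?_)
      (by simpa using (hlim x).norm.const_mul c⁻¹)
    rw [smul_apply, norm_smul, norm_inv, RCLike.norm_ofReal, abs_norm]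
    gcongr
    exact hf n

lemma HasNormalizedWeakStarNullSeq.extendRCLike {𝕜 : Type*} [RCLike 𝕜] [NormedSpace 𝕜 E]
    [NormedSpace ℝ E] [IsScalarTower ℝ 𝕜 E] (h : HasNormalizedWeakStarNullSeq ℝ E) :
    HasNormalizedWeakStarNullSeq 𝕜 E := by
  obtain ⟨f, hf, hlim⟩ := h
  refine ⟨fun n => (f n).extendRCLike, fun n => by rw [StrongDual.norm_extendRCLike, hf],
    fun x => ?_⟩
  have hofReal : ∀ y, Tendsto (fun n => (f n y : 𝕜)) atTop (𝓝 0) := fun y => by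
    simpa [Function.comp_def] using (RCLike.continuous_ofReal (K := 𝕜)).tendsto 0 |>.comp (hlim y)
  simpa [StrongDual.extendRCLike_apply] using
    (hofReal x).sub ((hofReal ((RCLike.I : 𝕜) • x)).const_mul RCLike.I)

lemma exists_strongDual_forall_tendsto_apply {𝕜 ι : Type*} [NontriviallyNormedField 𝕜]
    [ProperSpace 𝕜] [NormedSpace 𝕜 E] {l : Ultrafilter ι} {f : ι → StrongDual 𝕜 E} {R : ℝ}
    (hf : ∀ᶠ i in l, ‖f i‖ ≤ R) :
    ∃ g : StrongDual 𝕜 E, ∀ x, Tendsto (fun i => f i x) l (𝓝 (g x)) := by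
  obtain ⟨g, -, hg⟩ := (WeakDual.isCompact_closedBall (0 : StrongDual 𝕜 E) R).ultrafilter_le_nhds
    (l.map fun i => StrongDual.toWeakDual (f i)) (by
      rw [le_principal_iff, Ultrafilter.mem_coe, Ultrafilter.mem_map]
      filter_upwards [hf] with i hi
      simpa using hi)
  exact ⟨WeakDual.toStrongDual g, fun x => ((WeakDual.eval_continuous x).tendsto g).comp hg⟩

end WeakStarNull

section SignAverages

open scoped BigOperators

lemma sum_sq_expect_mul_le_expect_sq {ι Ω : Type*} [Fintype ι] [DecidableEq ι] [Fintype Ω]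
    {φ : ι → Ω → ℝ} (hφ : ∀ i j, 𝔼 ω, φ i ω * φ j ω = if i = j then 1 else 0) (h : Ω → ℝ) :
    ∑ i, (𝔼 ω, φ i ω * h ω) ^ 2 ≤ 𝔼 ω, h ω ^ 2 := by
  let c : ι → ℝ := fun i => 𝔼 ω, φ i ω * h ω
  have hcross : 𝔼 ω, h ω * ∑ i, c i * φ i ω = ∑ i, c i ^ 2 := by
    simp_rw [Finset.mul_sum, Finset.expect_sum_comm, mul_left_comm (h _), mul_comm (h _),
      ← Finset.mul_expect, sq, c]
  have hsq : 𝔼 ω, (∑ i, c i * φ i ω) ^ 2 = ∑ i, c i ^ 2 := by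
    simp_rw [sq, Finset.sum_mul_sum, Finset.expect_sum_comm, mul_mul_mul_comm (c _) (φ _ _),
      ← Finset.mul_expect, hφ]
    simp
  have hnonneg : 0 ≤ 𝔼 ω, (h ω - ∑ i, c i * φ i ω) ^ 2 :=
    Finset.expect_nonneg fun ω _ => sq_nonneg _
  simp_rw [sub_sq, Finset.expect_add_distrib, Finset.expect_sub_distrib, mul_assoc,
    ← Finset.mul_expect, hcross, hsq] at hnonneg
  linarith

lemma expect_sign_mul_sign {ι : Type*} [Fintype ι] [DecidableEq ι] (i j : ι) :
    𝔼 ε : ι → ℤˣ, ((ε i : ℤ) : ℝ) * ((ε j : ℤ) : ℝ) = if i = j then 1 else 0 := by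
  split_ifs with hij
  · subst hij
    simp [← Int.cast_mul, Int.units_coe_mul_self]
  · let χ : (ι → ℤˣ) →* ℝ := ((Int.castRingHom ℝ).toMonoidHom.comp (Units.coeHom ℤ)).comp
      (Pi.evalMonoidHom (fun _ : ι => ℤˣ) i * Pi.evalMonoidHom (fun _ : ι => ℤˣ) j)
    have hχ : χ ≠ 1 := fun h => by
      have := DFunLike.congr_fun h (Pi.mulSingle i (-1))
      norm_num [χ, Ne.symm hij] at this
    have hsum := sum_hom_units_eq_zero χ hχ
    rw [Finset.expect_eq_sum_div_card]
    simp_all [χ]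

variable {E : Type*} [SeminormedAddCommGroup E] [NormedSpace ℝ E] {R δ : ℝ}

lemma exists_sum_sq_apply_le_of_forall_sign {ι : Type*} [Fintype ι] {x : ι → E}
    (h : ∀ ε : ι → ℤˣ, ∃ f : StrongDual ℝ E, ‖f‖ ≤ R ∧ ∀ i, δ ≤ ε i • f (x i)) :
    ∃ g : ι → StrongDual ℝ E, (∀ i, δ ≤ g i (x i)) ∧
      ∀ z, ∑ i, g i z ^ 2 ≤ (R * ‖z‖) ^ 2 := by
  classical
  choose F hFR hF using h
  have happly : ∀ i z, (𝔼 ε, ε i • F ε) z = 𝔼 ε, ε i • F ε z := fun i z =>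
    map_expect ((ContinuousLinearMap.apply ℝ ℝ z).toLinearMap.restrictScalars ℚ≥0) _ _
  refine ⟨fun i => 𝔼 ε, ε i • F ε, fun i => ?_, fun z => ?_⟩
  · rw [happly]
    exact Finset.le_expect Finset.univ_nonempty fun ε _ => hF ε i
  · simp_rw [happly, Units.smul_def, zsmul_eq_mul]
    refine (sum_sq_expect_mul_le_expect_sq expect_sign_mul_sign fun ε => F ε z).trans ?_
    refine Finset.expect_le Finset.univ_nonempty fun ε _ => ?_
    exact sq_le_sq.2 (((F ε).le_of_opNorm_le (hFR ε) z).trans (le_abs_self _))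

lemma exists_seq_sum_sq_apply_le_of_forall_fin {x : ℕ → E}
    (h : ∀ n, ∃ g : Fin n → StrongDual ℝ E, (∀ i, δ ≤ g i (x i)) ∧
      ∀ z, ∑ i, g i z ^ 2 ≤ (R * ‖z‖) ^ 2) :
    ∃ g : ℕ → StrongDual ℝ E, (∀ i, δ ≤ g i (x i)) ∧
      ∀ z n, ∑ i ∈ Finset.range n, g i z ^ 2 ≤ (R * ‖z‖) ^ 2 := by
  choose g hδ hR using h
  let G : ℕ → ℕ → StrongDual ℝ E := fun i n => if hi : i < n then g n ⟨i, hi⟩ else 0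
  have hG : ∀ {i n} (hi : i < n), G i n = g n ⟨i, hi⟩ := fun hi => dif_pos hi
  have hnorm : ∀ i n, i < n → ‖G i n‖ ≤ |R| := fun i n hi =>
    ContinuousLinearMap.opNorm_le_bound _ (abs_nonneg R) fun z => by
      rw [hG hi, Real.norm_eq_abs, ← abs_norm z, ← abs_mul, ← sq_le_sq]
      exact (Finset.single_le_sum (f := fun i => g n i z ^ 2) (fun _ _ => sq_nonneg _)
        (Finset.mem_univ _)).trans (hR n z)
  have hlarge : ∀ i, ∀ᶠ n in (hyperfilter ℕ : Filter ℕ), i < n := fun i =>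
    Nat.hyperfilter_le_atTop (eventually_gt_atTop i)
  choose L hL using fun i => exists_strongDual_forall_tendsto_apply
    ((hlarge i).mono (hnorm i))
  refine ⟨L, fun i => ge_of_tendsto (hL i (x i)) ?_, fun z k =>
    le_of_tendsto (tendsto_finsetSum _ fun i _ => (hL i z).pow 2) ?_⟩
  · filter_upwards [hlarge i] with n hi
    rw [hG hi]
    exact hδ n ⟨i, hi⟩
  · filter_upwards [hlarge k] with n hk
    calc ∑ i ∈ Finset.range k, G i n z ^ 2
        ≤ ∑ i ∈ Finset.range n, G i n z ^ 2 :=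
          Finset.sum_le_sum_of_subset_of_nonneg (Finset.range_mono hk.le) fun _ _ _ => sq_nonneg _
      _ = ∑ i : Fin n, g n i z ^ 2 := by
          rw [Finset.sum_range]
          exact Finset.sum_congr rfl fun i _ => by rw [hG i.2]
      _ ≤ _ := hR n z

lemma hasNormalizedWeakStarNullSeq_of_forall_sign {x : ℕ → E} (hx : ∀ k, ‖x k‖ ≤ 1) (hδ : 0 < δ)
    (h : ∀ n (ε : Fin n → ℤˣ), ∃ f : StrongDual ℝ E, ‖f‖ ≤ R ∧ ∀ j, δ ≤ ε j • f (x j)) :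
    HasNormalizedWeakStarNullSeq ℝ E := by
  obtain ⟨g, hgδ, hgR⟩ := exists_seq_sum_sq_apply_le_of_forall_fin fun n =>
    exists_sum_sq_apply_le_of_forall_sign (h n)
  refine .of_le_norm hδ (f := g) (fun n => ?_) fun z => ?_
  · calc δ ≤ g n (x n) := hgδ n
      _ ≤ ‖g n (x n)‖ := le_abs_self _
      _ ≤ ‖g n‖ := (g n).unit_le_opNorm _ (hx n)
  · have hsq : Summable fun n => g n z ^ 2 :=
      summable_of_sum_range_le (fun _ => sq_nonneg _) (hgR z)
    rw [tendsto_zero_iff_abs_tendsto_zero]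
    simpa [Function.comp_def, Real.sqrt_sq_eq_abs] using hsq.tendsto_atTop_zero.sqrt

end SignAverages

section SequenceChoice

lemma exists_injective_choice_pairwise {ι α : Type*} [Finite ι] {l : Filter α}
    {P : ι → α → Prop} (hP : ∀ a, ∃ᶠ q in l, P a q) {r : α → α → Prop} [Std.Symm r]
    (hr : ∀ p, ∀ᶠ q in l, r p q) :
    ∃ n : ι → α, (∀ a, P a (n a)) ∧ Pairwise (Function.onFun r n) := by
  obtain ⟨e, he⟩ := exists_injective_nat ι
  have : Std.Symm fun f g : ι → α => ∀ a b, r (f a) (g b) :=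
    ⟨fun f g h a b => symm (h b a)⟩
  obtain ⟨F, hFP, hFr⟩ := exists_seq_of_forall_finset_exists' (fun f : ι → α => ∀ a, P a (f a))
    (fun f g => ∀ a b, r (f a) (g b)) fun s _ => by
      have hchoice : ∀ b, ∃ q, P b q ∧ ∀ f ∈ s, ∀ a, r (f a) q := fun b =>
        ((hP b).and_eventually ((eventually_all_finset s).2 fun f _ =>
          eventually_all.2 fun a => hr (f a))).exists
      choose g hgP hgr using hchoice
      exact ⟨g, hgP, fun f hf a b => hgr b f hf a⟩
  exact ⟨fun a => F (e a) a, fun a => hFP (e a) a, fun a b hab => hFr (he.ne hab) a b⟩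

lemma exists_seq_forall_fin {α : Type*} {P : ∀ n, (Fin n → α) → Prop} (h0 : P 0 Fin.elim0)
    (hsnoc : ∀ n x, P n x → ∃ y, P (n + 1) (Fin.snoc x y)) :
    ∃ x : ℕ → α, ∀ n, P n fun i => x i := by
  choose y hy using hsnoc
  let T : ∀ n, {x : Fin n → α // P n x} :=
    Nat.rec ⟨Fin.elim0, h0⟩ fun n x => ⟨Fin.snoc x.1 (y n x.1 x.2), hy n x.1 x.2⟩
  have hT : ∀ n, (T n).1 = fun i : Fin n => (T (i + 1)).1 (Fin.last i) := by
    intro n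
    induction n with
    | zero => exact Subsingleton.elim _ _
    | succ n ih =>
      funext i
      cases i using Fin.lastCases with
      | last => rfl
      | cast i => exact (Fin.snoc_castSucc (α := fun _ => α) _ _ i).trans (congrFun ih i)
  exact ⟨fun n => (T (n + 1)).1 (Fin.last n), fun n => hT n ▸ (T n).2⟩

lemma exists_forall_le_le_of_antitone_bddBelow {α : Type*} [Preorder α] [Nonempty α]
    {Λ : α → ℝ≥0∞} (hΛ : Monotone Λ)
    (hbdd : ∀ W : ℕ → α, Antitone W → BddBelow (Set.range W)) :
    ∃ a, ∀ b ≤ a, Λ a ≤ Λ b := by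
  have hstep : ∀ (n : ℕ) (a : α), ∃ b ≤ a, ∀ e ≤ a, Λ b ≤ Λ e + (n : ℝ≥0∞)⁻¹ := by
    intro n a
    by_cases htop : ⨅ e ≤ a, Λ e = ⊤
    · refine ⟨a, le_rfl, fun e he => ?_⟩
      simp only [iInf_eq_top] at htop
      simp [htop e he]
    · obtain ⟨b, hb⟩ := iInf_lt_iff.1
        (ENNReal.lt_add_right htop (ENNReal.inv_ne_zero.2 (ENNReal.natCast_ne_top n)))
      obtain ⟨hba, hb⟩ := iInf_lt_iff.1 hb
      exact ⟨b, hba, fun e he => hb.le.trans (by gcongr; exact iInf₂_le e he)⟩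
  choose next hle hnext using hstep
  let W : ℕ → α := Nat.rec (Classical.arbitrary α) next
  obtain ⟨d, hd⟩ := hbdd W (antitone_nat_of_succ_le fun n => hle n (W n))
  rw [mem_lowerBounds, Set.forall_mem_range] at hd
  refine ⟨d, fun e he => ?_⟩
  have hlim : Tendsto (fun n : ℕ => Λ e + (n : ℝ≥0∞)⁻¹) atTop (𝓝 (Λ e)) := by
    simpa using ENNReal.tendsto_inv_nat_nhds_zero.const_add (Λ e)
  exact ge_of_tendsto' hlim fun n =>
    (hΛ (hd (n + 1))).trans (hnext n (W n) e (he.trans (hd n)))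

end SequenceChoice

section LOneNorm

/-- The norm of `ℓ¹` on finitely supported families. -/
noncomputable def l1Norm {ι : Type*} (a : ι →₀ ℝ) : ℝ := a.sum fun _ t => |t|

variable {ι : Type*}

lemma l1Norm_single (i : ι) (t : ℝ) : l1Norm (Finsupp.single i t) = |t| :=
  Finsupp.sum_single_index abs_zero

lemma l1Norm_smul (c : ℝ) (a : ι →₀ ℝ) : l1Norm (c • a) = |c| * l1Norm a := by
  rw [l1Norm, Finsupp.sum_smul_index fun _ => abs_zero, l1Norm, Finsupp.mul_sum]
  simp only [abs_mul]

lemma l1Norm_sum_of_pairwise_disjoint {κ : Type*} {a : κ → ι →₀ ℝ}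
    (ha : Pairwise (Function.onFun Disjoint fun k => (a k).support)) (s : Finset κ) :
    l1Norm (∑ k ∈ s, a k) = ∑ k ∈ s, l1Norm (a k) := by
  classical
  induction s using Finset.induction_on with
  | empty => simp [l1Norm]
  | insert k s hk ih =>
    have hdisj : Disjoint (a k).support (∑ j ∈ s, a j).support :=
      ((Finset.disjoint_biUnion_right _ _ _).2 fun j hj =>
        ha (ne_of_mem_of_not_mem hj hk).symm).mono_right Finsupp.support_finsetSum
    rw [Finset.sum_insert hk, Finset.sum_insert hk, ← ih]
    exact Finsupp.sum_add_index_of_disjoint hdisj _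

lemma norm_linearCombination_le_mul_l1Norm {M : Type*} [SeminormedAddCommGroup M]
    [NormedSpace ℝ M] {u : ι → M} {R : ℝ} (hu : ∀ i, ‖u i‖ ≤ R) (a : ι →₀ ℝ) :
    ‖Finsupp.linearCombination ℝ u a‖ ≤ R * l1Norm a := by
  rw [Finsupp.linearCombination_apply, l1Norm, Finsupp.mul_sum]
  refine norm_sum_le_of_le _ fun i _ => ?_
  rw [norm_smul, Real.norm_eq_abs, mul_comm]
  exact mul_le_mul_of_nonneg_right (hu i) (abs_nonneg _)

lemma RosenthalIndependent.mul_l1Norm_le {E : Type*} [SeminormedAddCommGroup E] [NormedSpace ℝ E]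
    {y : ℕ → StrongDual ℝ E} {r s : ℝ}
    (h : RosenthalIndependent (fun n (x : Metric.closedBall (0 : E) 1) => y n x) r s)
    (a : ℕ →₀ ℝ) :
    (s - r) / 2 * l1Norm a ≤ ‖Finsupp.linearCombination ℝ y a‖ := by
  set T := Finsupp.linearCombination ℝ y a with hT
  obtain ⟨k, hk⟩ := a.support.exists_nat_subset_range
  obtain ⟨x, hx⟩ := h {i | 0 ≤ a i} k
  obtain ⟨z, hz⟩ := h {i | 0 ≤ a i}ᶜ k
  have hT_apply : ∀ x, T x = a.sum fun i t => t * y i x := fun x => by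
    simp [hT, Finsupp.linearCombination_apply, Finsupp.sum]
  have hlower : (s - r) * l1Norm a ≤ T x - T z := by
    rw [hT_apply, hT_apply, ← Finsupp.sum_sub, l1Norm, Finsupp.mul_sum]
    refine Finset.sum_le_sum fun i hi => ?_
    have hxi := hx i (Finset.mem_range.1 (hk hi))
    have hzi := hz i (Finset.mem_range.1 (hk hi))
    change (s - r) * |a i| ≤ a i * y i x - a i * y i z
    simp only [Set.mem_ofPred_eq, Set.mem_compl_iff, not_not] at hxi hzi
    rcases le_or_gt 0 (a i) with ha | ha
    · rw [abs_of_nonneg ha]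
      nlinarith [hxi.1 ha, hzi.2 ha]
    · rw [abs_of_neg ha]
      nlinarith [hxi.2 ha.not_ge, hzi.1 ha.not_ge]
  have hupper : ∀ x : Metric.closedBall (0 : E) 1, |T x| ≤ ‖T‖ := fun x =>
    T.unit_le_opNorm _ (mem_closedBall_zero_iff.1 x.2)
  linarith [(abs_le.1 (hupper x)).2, (abs_le.1 (hupper z)).1]

end LOneNorm

section HaglerJohnson

/-- A block sequence of a sequence `u` of vectors: the `n`-th block is a combination of the `u i`
with `n ≤ i` whose coefficients have `ℓ¹`-norm one. The data are the coefficients; `u` enters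
through `BlockSeq.term`. -/
structure BlockSeq {M : Type*} (u : ℕ → M) where
  coeff : ℕ → ℕ →₀ ℝ
  l1Norm_coeff : ∀ n, l1Norm (coeff n) = 1
  le_of_mem_support : ∀ n, ∀ i ∈ (coeff n).support, n ≤ i

namespace BlockSeq

variable {E : Type*} [SeminormedAddCommGroup E] [NormedSpace ℝ E] {u : ℕ → StrongDual ℝ E}
  {R δ : ℝ}

/-- The blocks themselves. -/
noncomputable def term {M : Type*} [AddCommGroup M] [Module ℝ M] {u : ℕ → M} (w : BlockSeq u)
    (n : ℕ) : M :=
  Finsupp.linearCombination ℝ u (w.coeff n)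

lemma norm_term_le {M : Type*} [SeminormedAddCommGroup M] [NormedSpace ℝ M] {u : ℕ → M}
    (hu : ∀ n, ‖u n‖ ≤ R) (w : BlockSeq u) (n : ℕ) : ‖w.term n‖ ≤ R := by
  simpa [term, w.l1Norm_coeff] using norm_linearCombination_le_mul_l1Norm hu (w.coeff n)

lemma eventually_disjoint_support {M : Type*} {u : ℕ → M} (w : BlockSeq u) (p : ℕ) :
    ∀ᶠ q in atTop, Disjoint (w.coeff p).support (w.coeff q).support := by
  obtain ⟨k, hk⟩ := (w.coeff p).support.exists_nat_subset_range
  filter_upwards [eventually_ge_atTop k] with q hq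
  exact Finset.disjoint_left.2 fun i hip hiq =>
    (Finset.mem_range.1 (hk hip)).not_ge (hq.trans (w.le_of_mem_support q i hiq))

instance {M : Type*} (u : ℕ → M) : Nonempty (BlockSeq u) :=
  ⟨{ coeff := fun n => Finsupp.single n 1
     l1Norm_coeff := fun n => by rw [l1Norm_single, abs_one]
     le_of_mem_support := fun n i hi => by
      rw [Finset.mem_singleton.1 (Finsupp.support_single_subset hi)] }⟩

/-- `v ≤ w` when, from some index on, `v` is dominated pointwise by the tails of `w`. Unlike the
relation of being a sequence of further blocks, this has lower bounds of decreasing sequences by a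
plain diagonal argument. -/
instance : Preorder (BlockSeq u) where
  le v w := ∀ᶠ n in atTop, ∀ x, ‖v.term n x‖ₑ ≤ ⨆ i ≥ n, ‖w.term i x‖ₑ
  le_refl w := .of_forall fun n x => le_iSup₂ (f := fun i (_ : i ≥ n) => ‖w.term i x‖ₑ) n le_rfl
  le_trans v w z hvw hwz := by
    filter_upwards [hvw, eventually_forall_ge_atTop.2 hwz] with n hv hw x
    exact (hv x).trans (iSup₂_le fun i hi => (hw i hi x).trans
      (biSup_mono fun j hj => le_trans hi hj))

lemma le_def {v w : BlockSeq u} :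
    v ≤ w ↔ ∀ᶠ n in atTop, ∀ x, ‖v.term n x‖ₑ ≤ ⨆ i ≥ n, ‖w.term i x‖ₑ :=
  Iff.rfl

lemma bddBelow_range_of_antitone {W : ℕ → BlockSeq u} (hW : Antitone W) :
    BddBelow (Set.range W) := by
  have hdom : ∀ m, ∃ N ≥ m, ∀ k ≤ m, ∀ x, ‖(W m).term N x‖ₑ ≤ ⨆ i ≥ N, ‖(W k).term i x‖ₑ := by
    intro m
    exact ((eventually_ge_atTop m).and ((eventually_all_finite (Set.finite_Iic m)).2
      fun k hk => le_def.1 (hW hk))).exists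
  choose N hN hdom using hdom
  let d : BlockSeq u :=
    { coeff := fun m => (W m).coeff (N m)
      l1Norm_coeff := fun m => (W m).l1Norm_coeff (N m)
      le_of_mem_support := fun m i hi => (hN m).trans ((W m).le_of_mem_support (N m) i hi) }
  refine ⟨d, Set.forall_mem_range.2 fun k => ?_⟩
  filter_upwards [eventually_ge_atTop k] with m hkm x
  exact (hdom m k hkm x).trans (biSup_mono fun i hi => (hN m).trans hi)

/-- The supremum of `limsup |w n x|` over the unit ball, the quantity that Hagler and Johnson
minimize over block sequences. -/
noncomputable def size (w : BlockSeq u) : ℝ≥0∞ :=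
  ⨆ x : Metric.closedBall (0 : E) 1, limsup (fun n => ‖w.term n x‖ₑ) atTop

lemma size_mono : Monotone (size (u := u)) := by
  refine fun v w hvw => iSup_mono fun x => ?_
  rw [limsup_eq_iInf_iSup_of_nat, limsup_eq_iInf_iSup_of_nat]
  obtain ⟨N, hN⟩ := eventually_atTop.1 (le_def.1 hvw)
  refine le_iInf fun n => iInf_le_of_le (max N n) (iSup₂_le fun i hi => ?_)
  exact (hN i (le_of_max_le_left hi) x).trans
    (biSup_mono fun j hj => (le_of_max_le_right hi).trans hj)

lemma exists_size_minimal (u : ℕ → StrongDual ℝ E) :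
    ∃ w : BlockSeq u, ∀ v ≤ w, w.size ≤ v.size :=
  exists_forall_le_le_of_antitone_bddBelow size_mono fun _ => bddBelow_range_of_antitone

lemma size_lt_top (hu : ∀ n, ‖u n‖ ≤ R) (w : BlockSeq u) : w.size < ⊤ := by
  refine lt_of_le_of_lt (iSup_le fun x => limsup_le_of_le (h := .of_forall fun n => ?_))
    (ENNReal.ofReal_lt_top (r := R))
  rw [← ofReal_norm]
  exact ENNReal.ofReal_le_ofReal (((w.term n).unit_le_opNorm x
    (mem_closedBall_zero_iff.1 x.2)).trans (norm_term_le hu w n))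

lemma eventually_abs_lt_of_size_lt {w : BlockSeq u} {b : ℝ} (h : w.size < ENNReal.ofReal b)
    (x : Metric.closedBall (0 : E) 1) : ∀ᶠ n in atTop, |w.term n x| < b := by
  filter_upwards [eventually_lt_of_limsup_lt ((le_iSup _ x).trans_lt h)] with n hn
  rwa [← ofReal_norm, ENNReal.ofReal_lt_ofReal_iff_of_nonneg (norm_nonneg _)] at hn

lemma exists_frequently_lt_of_lt_size {w : BlockSeq u} {b : ℝ} (h : ENNReal.ofReal b < w.size) :
    ∃ x : Metric.closedBall (0 : E) 1, ∃ᶠ n in atTop, b < w.term n x := by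
  obtain ⟨x, hx⟩ := lt_iSup_iff.1 h
  have habs : ∃ᶠ n in atTop, b < w.term n x ∨ b < w.term n (-x) :=
    (frequently_lt_of_lt_limsup (by isBoundedDefault) hx).mono fun n hn => by
      rw [← ofReal_norm] at hn
      simpa [lt_abs] using (ENNReal.ofReal_lt_ofReal_iff'.1 hn).1
  rcases frequently_or_distrib.1 habs with hx | hx
  · exact ⟨x, hx⟩
  · exact ⟨-x, hx⟩

lemma tendsto_term_apply_zero_of_size_eq_zero {w : BlockSeq u} (h : w.size = 0) (x : E) :
    Tendsto (fun n => w.term n x) atTop (𝓝 0) := by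
  refine tendsto_apply_zero_of_forall_closedBall (fun x => ?_) x
  rw [tendsto_zero_iff_enorm_tendsto_zero]
  exact tendsto_of_le_liminf_of_limsup_le bot_le ((le_iSup _ x).trans_eq h)

lemma le_of_term_eq_sum {ι : Type*} [Fintype ι] {v w : BlockSeq u} {b : ι → ℝ}
    (hb : ∑ a, |b a| = 1) {n : ℕ → ι → ℕ} (hn : ∀ l a, l ≤ n l a)
    (hv : ∀ l, v.term l = ∑ a, b a • w.term (n l a)) : v ≤ w := by
  have hb_enorm : ∑ a, ‖b a‖ₑ = 1 := by
    simp_rw [Real.enorm_eq_ofReal_abs]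
    rw [← ENNReal.ofReal_sum_of_nonneg fun _ _ => abs_nonneg _, hb, ENNReal.ofReal_one]
  refine le_def.2 (.of_forall fun l x => ?_)
  calc ‖v.term l x‖ₑ = ‖∑ a, b a * w.term (n l a) x‖ₑ := by simp [hv]
    _ ≤ ∑ a, ‖b a‖ₑ * ‖w.term (n l a) x‖ₑ := by
        simpa only [enorm_mul] using enorm_sum_le Finset.univ fun a => b a * w.term (n l a) x
    _ ≤ ∑ a, ‖b a‖ₑ * ⨆ i ≥ l, ‖w.term i x‖ₑ := by
        gcongr with a
        exact le_iSup₂ (f := fun i (_ : i ≥ l) => ‖w.term i x‖ₑ) (n l a) (hn l a)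
    _ = ⨆ i ≥ l, ‖w.term i x‖ₑ := by rw [← Finset.sum_mul, hb_enorm, one_mul]

lemma exists_le_term_eq_sum {ι : Type*} [Fintype ι] (w : BlockSeq u) {b : ι → ℝ}
    (hb : ∑ a, |b a| = 1) {P : ι → ℕ → Prop} (hP : ∀ a, ∃ᶠ n in atTop, P a n) :
    ∃ v ≤ w, ∃ n : ℕ → ι → ℕ, (∀ l a, l ≤ n l a ∧ P a (n l a)) ∧
      ∀ l, v.term l = ∑ a, b a • w.term (n l a) := by
  have : Std.Symm fun p q => Disjoint (w.coeff p).support (w.coeff q).support :=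
    ⟨fun _ _ h => h.symm⟩
  choose n hn hdisj using fun l => exists_injective_choice_pairwise
    (fun a => ((hP a).and_eventually (eventually_ge_atTop l)).mono fun _ => And.symm)
    w.eventually_disjoint_support
  have hsupp : ∀ l, Pairwise (Function.onFun Disjoint
      fun a => (b a • w.coeff (n l a)).support) := fun l a a' haa' =>
    (hdisj l haa').mono Finsupp.support_smul Finsupp.support_smul
  let v : BlockSeq u :=
    { coeff := fun l => ∑ a, b a • w.coeff (n l a)
      l1Norm_coeff := fun l => by
        simp only [l1Norm_sum_of_pairwise_disjoint (hsupp l), l1Norm_smul, w.l1Norm_coeff,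
          mul_one, hb]
      le_of_mem_support := fun l i hi => by
        obtain ⟨a, -, ha⟩ := Finset.mem_biUnion.1 (Finsupp.support_finsetSum hi)
        exact (hn l a).1.trans (w.le_of_mem_support _ i (Finsupp.support_smul ha)) }
  have hv : ∀ l, v.term l = ∑ a, b a • w.term (n l a) := fun l => by
    simp only [v, term, map_sum, map_smul]
  exact ⟨v, le_of_term_eq_sum hb (fun l a => (hn l a).1) hv, n, hn, hv⟩

lemma sub_one_sub_abs_mul_le_of_le_sum {ι : Type*} [Fintype ι] {b t : ι → ℝ} {A B : ℝ}
    (hb : ∑ a, |b a| = 1) (hA : A ≤ ∑ a, b a * t a) (ht : ∀ a, |t a| ≤ B) (a : ι) :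
    A - (1 - |b a|) * B ≤ b a * t a := by
  classical
  have hrest : ∑ j ∈ Finset.univ.erase a, b j * t j ≤ ∑ j ∈ Finset.univ.erase a, |b j| * B :=
    Finset.sum_le_sum fun j _ => (le_abs_self _).trans
      ((abs_mul _ _).trans_le (mul_le_mul_of_nonneg_left (ht j) (abs_nonneg _)))
  rw [← Finset.sum_mul] at hrest
  have hbt := Finset.add_sum_erase Finset.univ (fun j => b j * t j) (Finset.mem_univ a)
  have hb_erase := Finset.add_sum_erase Finset.univ (fun j => |b j|) (Finset.mem_univ a)
  rw [hb] at hb_erase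
  rw [show 1 - |b a| = ∑ j ∈ Finset.univ.erase a, |b j| by linarith]
  linarith

/-- By minimality the average of `w` with weights `b` still exceeds `A` infinitely often at some
point, while the averaged values are eventually below `B`. -/
lemma exists_forall_frequently_le_weight_mul {ι : Type*} [Fintype ι] {w : BlockSeq u}
    (hw : ∀ v ≤ w, w.size ≤ v.size) {A B : ℝ} (hA : ENNReal.ofReal A < w.size)
    (hB : w.size < ENNReal.ofReal B) {b : ι → ℝ} (hb : ∑ a, |b a| = 1) {P : ι → ℕ → Prop}
    (hP : ∀ a, ∃ᶠ n in atTop, P a n) :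
    ∃ x : Metric.closedBall (0 : E) 1, ∀ a, ∃ᶠ n in atTop,
      P a n ∧ A - (1 - |b a|) * B ≤ b a * w.term n x := by
  obtain ⟨v, hvw, n, hn, hv⟩ := w.exists_le_term_eq_sum hb hP
  obtain ⟨x, hx⟩ := exists_frequently_lt_of_lt_size (hA.trans_le (hw v hvw))
  refine ⟨x, fun a => frequently_atTop.2 fun N => ?_⟩
  obtain ⟨l, hl, hNl, hbound⟩ := (hx.and_eventually ((eventually_ge_atTop N).and
    (eventually_forall_ge_atTop.2 (eventually_abs_lt_of_size_lt hB x)))).exists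
  exact ⟨n l a, hNl.trans (hn l a).1, (hn l a).2, sub_one_sub_abs_mul_le_of_le_sum
    (t := fun a => w.term (n l a) x) hb (by simpa [hv] using hl.le)
    (fun a => (hbound _ (hn l a).1).le) a⟩

lemma exists_forall_frequently_sub_card_mul_le_sign_smul {ι : Type*} [Fintype ι] [Nonempty ι]
    {w : BlockSeq u} (hw : ∀ v ≤ w, w.size ≤ v.size) {A B : ℝ} (hA : ENNReal.ofReal A < w.size)
    (hB : w.size < ENNReal.ofReal B) (σ : ι → ℤˣ) {P : ι → ℕ → Prop}
    (hP : ∀ a, ∃ᶠ n in atTop, P a n) :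
    ∃ x : Metric.closedBall (0 : E) 1, ∀ a, ∃ᶠ n in atTop,
      P a n ∧ B - Fintype.card ι * (B - A) ≤ σ a • w.term n x := by
  set K : ℝ := (Fintype.card ι : ℝ)
  have hK : 0 < K := Nat.cast_pos.2 Fintype.card_pos
  have hb : ∀ a, |K⁻¹ * (σ a : ℤ)| = K⁻¹ := fun a => by
    rw [abs_mul, ← Int.cast_abs, Int.isUnit_iff_abs_eq.1 (σ a).isUnit, Int.cast_one, mul_one,
      abs_of_pos (inv_pos.2 hK)]
  obtain ⟨x, hx⟩ := exists_forall_frequently_le_weight_mul hw hA hB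
    (b := fun a => K⁻¹ * (σ a : ℤ)) (by simp [hb, K]) hP
  refine ⟨x, fun a => (hx a).mono fun n hn => ⟨hn.1, ?_⟩⟩
  rw [Units.smul_def, zsmul_eq_mul]
  calc B - K * (B - A) = K * (A - (1 - K⁻¹) * B) := by
        field_simp
        ring
    _ ≤ K * (K⁻¹ * (σ a : ℤ) * w.term n x) := by
        gcongr
        simpa only [hb] using hn.2
    _ = (σ a : ℤ) * w.term n x := by rw [mul_assoc, mul_inv_cancel_left₀ hK.ne']

lemma exists_forall_frequently_le_sign_smul {ι : Type*} [Finite ι] [Nonempty ι]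
    (hu : ∀ n, ‖u n‖ ≤ R) {w : BlockSeq u} (hw : ∀ v ≤ w, w.size ≤ v.size) (hδ₀ : 0 < δ)
    (hδ : ENNReal.ofReal δ < w.size) (σ : ι → ℤˣ) {P : ι → ℕ → Prop}
    (hP : ∀ a, ∃ᶠ n in atTop, P a n) :
    ∃ x : Metric.closedBall (0 : E) 1, ∀ a, ∃ᶠ n in atTop, P a n ∧ δ ≤ σ a • w.term n x := by
  have := Fintype.ofFinite ι
  set S := w.size.toReal
  have hS : w.size = ENNReal.ofReal S := (ENNReal.ofReal_toReal (size_lt_top hu w).ne).symm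
  have hδS : δ < S := (ENNReal.ofReal_lt_ofReal_iff_of_nonneg hδ₀.le).1 (hS ▸ hδ)
  let η : ℝ := (S - δ) / (2 * Fintype.card ι)
  have hη : 0 < η := div_pos (sub_pos.2 hδS) (by positivity)
  have hlt : ∀ {p q : ℝ}, 0 < q → p < q → ENNReal.ofReal p < ENNReal.ofReal q := fun hq hpq =>
    (ENNReal.ofReal_lt_ofReal_iff hq).2 hpq
  have hmargin : S + η - Fintype.card ι * (S + η - (S - η)) = δ + η := by
    simp only [η]
    field_simp
    ring
  obtain ⟨x, hx⟩ := exists_forall_frequently_sub_card_mul_le_sign_smul hw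
    (hS ▸ hlt (hδ₀.trans hδS) (sub_lt_self S hη))
    (hS ▸ hlt (by linarith) (lt_add_of_pos_right S hη)) σ hP
  exact ⟨x, fun a => (hx a).mono fun n hn => ⟨hn.1, by linarith [hn.2]⟩⟩

lemma exists_seq_forall_frequently_le_sign_smul (hu : ∀ n, ‖u n‖ ≤ R) {w : BlockSeq u}
    (hw : ∀ v ≤ w, w.size ≤ v.size) (hδ₀ : 0 < δ) (hδ : ENNReal.ofReal δ < w.size) :
    ∃ x : ℕ → Metric.closedBall (0 : E) 1, ∀ k (ε : Fin k → ℤˣ),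
      ∃ᶠ n in atTop, ∀ j, δ ≤ ε j • w.term n (x j) := by
  refine exists_seq_forall_fin (P := fun k (x : Fin k → Metric.closedBall (0 : E) 1) =>
    ∀ ε : Fin k → ℤˣ, ∃ᶠ n in atTop, ∀ j, δ ≤ ε j • w.term n (x j))
    (fun ε => .of_forall fun n j => j.elim0) fun k x hx => ?_
  obtain ⟨y, hy⟩ := exists_forall_frequently_le_sign_smul hu hw hδ₀ hδ
    (fun ε : Fin (k + 1) → ℤˣ => ε (Fin.last k)) fun ε => hx (Fin.init ε)
  refine ⟨y, fun ε => (hy ε).mono fun n hn => ?_⟩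
  rw [Fin.forall_fin_succ']
  simpa [Fin.init] using hn

end BlockSeq

theorem hasNormalizedWeakStarNullSeq_of_mul_l1Norm_le {E : Type*} [SeminormedAddCommGroup E]
    [NormedSpace ℝ E] {u : ℕ → StrongDual ℝ E} {R c : ℝ} (hu : ∀ n, ‖u n‖ ≤ R) (hc : 0 < c)
    (hlower : ∀ a : ℕ →₀ ℝ, c * l1Norm a ≤ ‖Finsupp.linearCombination ℝ u a‖) :
    HasNormalizedWeakStarNullSeq ℝ E := by
  obtain ⟨w, hw⟩ := BlockSeq.exists_size_minimal u
  rcases eq_or_ne w.size 0 with hsize | hsize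
  · refine .of_le_norm hc (f := w.term) (fun n => ?_)
      (BlockSeq.tendsto_term_apply_zero_of_size_eq_zero hsize)
    simpa [BlockSeq.term, w.l1Norm_coeff] using hlower (w.coeff n)
  · obtain ⟨δ, -, hδ₀, hδ⟩ := ENNReal.lt_iff_exists_real_btwn.1 (pos_iff_ne_zero.2 hsize)
    obtain ⟨x, hx⟩ := BlockSeq.exists_seq_forall_frequently_le_sign_smul hu hw
      (ENNReal.ofReal_pos.1 hδ₀) hδ
    refine hasNormalizedWeakStarNullSeq_of_forall_sign (R := R)
      (fun k => mem_closedBall_zero_iff.1 (x k).2) (ENNReal.ofReal_pos.1 hδ₀) fun k ε => ?_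
    obtain ⟨n, hn⟩ := (hx k ε).exists
    exact ⟨w.term n, w.norm_term_le hu n, hn⟩

end HaglerJohnson

section InfiniteDimensional

lemma not_finiteDimensional_strongDual {𝕜 E : Type*} [RCLike 𝕜] [NormedAddCommGroup E]
    [NormedSpace 𝕜 E] (h : ¬ FiniteDimensional 𝕜 E) : ¬ FiniteDimensional 𝕜 (StrongDual 𝕜 E) :=
  fun _ => h (FiniteDimensional.of_injective
    (NormedSpace.inclusionInDoubleDualLi 𝕜 (E := E)).toLinearMap
    (NormedSpace.inclusionInDoubleDualLi 𝕜).injective)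

theorem hasNormalizedWeakStarNullSeq_of_not_finiteDimensional {E : Type*} [NormedAddCommGroup E]
    [NormedSpace ℝ E] (h : ¬ FiniteDimensional ℝ E) :
    HasNormalizedWeakStarNullSeq ℝ E := by
  obtain ⟨R, y, -, hyR, hsep⟩ :=
    exists_seq_norm_le_one_le_norm_sub (not_finiteDimensional_strongDual h)
  have hbdd : ∀ x : Metric.closedBall (0 : E) 1,
      Bornology.IsBounded (Set.range fun n => y n x) := fun x =>
    Metric.isBounded_closedBall.subset <| Set.range_subset_iff.2 fun n =>
      mem_closedBall_zero_iff.2 <|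
        ((y n).unit_le_opNorm x (mem_closedBall_zero_iff.1 x.2)).trans (hyR n)
  rcases exists_pointwise_tendsto_or_rosenthalIndependent hbdd with
    ⟨m, hm, hlim⟩ | ⟨m, r, s, hrs, hindep⟩
  · refine .of_le_norm one_pos (f := fun j => y (m (j + 1)) - y (m j))
      (fun j => hsep (hm j.lt_succ_self).ne') (tendsto_apply_zero_of_forall_closedBall fun x => ?_)
    obtain ⟨c, hc⟩ := hlim x
    simpa using (hc.comp (tendsto_add_atTop_nat 1)).sub hc
  · exact hasNormalizedWeakStarNullSeq_of_mul_l1Norm_le (fun n => hyR (m n))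
      (half_pos (sub_pos.2 hrs)) hindep.mul_l1Norm_le

end InfiniteDimensional

theorem josefson_nissenzweig_general {𝕜 : Type*} [RCLike 𝕜] {X : Type*}
    [NormedAddCommGroup X] [NormedSpace 𝕜 X] (h : ¬ FiniteDimensional 𝕜 X) :
    ∃ f : ℕ → X →L[𝕜] 𝕜, (∀ n, ‖f n‖ = 1) ∧
      ∀ x : X, Tendsto (fun n => f n x) atTop (nhds 0) := by
  let _ : NormedSpace ℝ X := NormedSpace.restrictScalars ℝ 𝕜 X
  have hreal : ¬ FiniteDimensional ℝ X := fun _ => h (FiniteDimensional.right ℝ 𝕜 X)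
  exact (hasNormalizedWeakStarNullSeq_of_not_finiteDimensional hreal).extendRCLike

/-- **The Josefson–Nissenzweig theorem.** For every infinite-dimensional (real
or complex) Banach space `X` there is a sequence of norm-one functionals
converging to `0` in the weak* topology. -/
theorem josefson_nissenzweig {𝕜 : Type*} [RCLike 𝕜] {X : Type*}
    [NormedAddCommGroup X] [NormedSpace 𝕜 X] [CompleteSpace X]
    (h : ¬ FiniteDimensional 𝕜 X) :
    ∃ f : ℕ → X →L[𝕜] 𝕜, (∀ n, ‖f n‖ = 1) ∧
      ∀ x : X, Tendsto (fun n => f n x) atTop (nhds 0) :=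
  josefson_nissenzweig_general h
end

section
/- Let $X$ be a Banach space such that no sequence in the dual $X'$ is equivalent to the unit vector basis of $\ell^1$ (i.e. there is no sequence $(x'_n)$ in $X'$ and constants $A, B > 0$ with $A\sum_{i=1}^r |t_i| \geq \|\sum_{i=1}^r t_i x'_i\| \geq B \sum_{i=1}^r |t_i|$ for all $r$ and scalars $t_1,\ldots,t_r$). Suppose moreover that every weak*-convergent sequence in $X'$ is norm convergent. Then $X'$ is finite-dimensional. -/
open Filter

open scoped Topology

/-!
Rosenthal's `ℓ¹` argument. Let `f n` be a pointwise bounded sequence of scalar functions on a set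
`S`. Two discs that are small compared to the distance of their centres give, for each `n`, the pair
of sets on which `f n` takes values in the first or in the second disc. Either some such sequence of
pairs has a Boolean independent subsequence, which forces an `ℓ¹` lower estimate, or a single
diagonal subsequence makes every point eventually avoid one disc of each pair with centres in a
countable dense set, which forces pointwise convergence. Applied to functionals on the unit ball of
`X`, this shows that without `ℓ¹` in the dual every bounded sequence of functionals has a
weak*-convergent subsequence. If that convergence is automatically in norm, the unit ball of the
dual is compact and Riesz's theorem applies.
-/

section Combinatorics

variable {S : Type*}

/-- A sequence of pairs of sets `(C n true, C n false)` converges on `X` along `M` if every point of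
`X` lies, for all but finitely many `n ∈ M`, outside one fixed member of the pair. This is
Rosenthal's notion, which he uses for disjoint pairs. -/
def ConvergesOn (C : ℕ → Bool → Set S) (X : Set S) (M : Set ℕ) : Prop :=
  ∀ s ∈ X, ∃ b, {n ∈ M | s ∈ C n b}.Finite

/-- No subsequence of the sequence of pairs `C` along `M` converges on `X`. -/
def NowhereConvergesOn (C : ℕ → Bool → Set S) (X : Set S) (M : Set ℕ) : Prop :=
  ∀ N ⊆ M, N.Infinite → ¬ ConvergesOn C X N

/-- Boolean independence of a sequence of pairs of sets: every choice of one member from each of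
the first `r` pairs has a common point. -/
def BooleanIndependent (C : ℕ → Bool → Set S) : Prop :=
  ∀ (r : ℕ) (e : Fin r → Bool), (⋂ i : Fin r, C i (e i)).Nonempty

theorem exists_infinite_forall_of_almost_hereditary {ι : Type*} [Countable ι]
    {P : ι → Set ℕ → Prop} (hP : ∀ k M N, P k M → (N \ M).Finite → P k N)
    {M₀ : Set ℕ} (hM₀ : M₀.Infinite)
    (hdense : ∀ k, ∀ M ⊆ M₀, M.Infinite → ∃ N ⊆ M, N.Infinite ∧ P k N) :
    ∃ L ⊆ M₀, L.Infinite ∧ ∀ k, P k L := by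
  rcases isEmpty_or_nonempty ι with _ | _
  · exact ⟨M₀, subset_rfl, hM₀, isEmptyElim⟩
  obtain ⟨enum, henum⟩ := exists_surjective_nat ι
  have hnext : ∀ (k : ℕ) (M : {M : Set ℕ // M ⊆ M₀ ∧ M.Infinite}),
      ∃ N : {M : Set ℕ // M ⊆ M₀ ∧ M.Infinite}, N.1 ⊆ M.1 ∧ P (enum k) N.1 := by
    rintro k ⟨M, hM, hMinf⟩
    obtain ⟨N, hNM, hNinf, hN⟩ := hdense (enum k) M hM hMinf
    exact ⟨⟨N, hNM.trans hM, hNinf⟩, hNM, hN⟩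
  choose next hnext_sub hnext_P using hnext
  let tower (k : ℕ) : {M : Set ℕ // M ⊆ M₀ ∧ M.Infinite} :=
    Nat.rec ⟨M₀, subset_rfl, hM₀⟩ next k
  have htower : Antitone fun k => (tower k).1 :=
    antitone_nat_of_succ_le fun k => hnext_sub k (tower k)
  obtain ⟨φ, hφ, hφ_mem⟩ := extraction_forall_of_frequently fun k =>
    Nat.frequently_atTop_iff_infinite.2 (tower (k + 1)).2.2
  refine ⟨Set.range φ, ?_, Set.infinite_range_of_injective hφ.injective, henum.forall.2 fun k => ?_⟩
  · rintro _ ⟨k, rfl⟩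
    exact (tower (k + 1)).2.1 (hφ_mem k)
  · refine hP _ _ _ (hnext_P k (tower k)) (((Set.finite_Iio k).image φ).subset ?_)
    rintro _ ⟨⟨j, rfl⟩, hj⟩
    exact ⟨j, lt_of_not_ge fun hkj => hj (htower (Nat.succ_le_succ hkj) (hφ_mem j)), rfl⟩

variable {C : ℕ → Bool → Set S} {X : Set S} {M N : Set ℕ}

theorem ConvergesOn.of_finite_diff (h : ConvergesOn C X M) (hNM : (N \ M).Finite) :
    ConvergesOn C X N := by
  intro s hs
  obtain ⟨b, hb⟩ := h s hs
  refine ⟨b, (hb.union hNM).subset ?_⟩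
  rintro n ⟨hn, hsn⟩
  exact (em (n ∈ M)).imp (fun hnM => ⟨hnM, hsn⟩) fun hnM => ⟨hn, hnM⟩

theorem not_nowhereConvergesOn :
    ¬ NowhereConvergesOn C X M ↔ ∃ N ⊆ M, N.Infinite ∧ ConvergesOn C X N := by
  simp only [NowhereConvergesOn, not_forall, not_not, exists_prop]

theorem NowhereConvergesOn.nonempty (h : NowhereConvergesOn C X M) (hM : M.Infinite) :
    X.Nonempty := by
  rw [Set.nonempty_iff_ne_empty]
  rintro rfl
  exact h M subset_rfl hM fun _ hs => hs.elim

theorem NowhereConvergesOn.finite_setOf_convergesOn_inter (h : NowhereConvergesOn C X M)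
    (b : Bool) : {n ∈ M | ConvergesOn C (X ∩ C n b) M}.Finite := by
  by_contra hinf
  have hdiv := h _ (Set.sep_subset _ _) hinf
  simp only [ConvergesOn, not_forall, not_exists] at hdiv
  obtain ⟨s, hs, hs_inf⟩ := hdiv
  obtain ⟨n, ⟨-, hn⟩, hsn⟩ := Set.Infinite.nonempty (hs_inf b)
  obtain ⟨c, hc⟩ := hn s ⟨hs, hsn⟩
  exact hs_inf c (hc.subset fun m hm => ⟨hm.1.1, hm.2⟩)

theorem NowhereConvergesOn.mono (h : NowhereConvergesOn C X M) (hNM : N ⊆ M) :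
    NowhereConvergesOn C X N :=
  fun L hL => h L (hL.trans hNM)

theorem exists_forall_nowhereConvergesOn_inter {F : Set (Set S)} (hF : F.Finite)
    (hM : M.Infinite) (h : ∀ X ∈ F, NowhereConvergesOn C X M) :
    ∃ n ∈ M, ∃ N ⊆ M, N.Infinite ∧ ∀ X ∈ F, ∀ b, NowhereConvergesOn C (X ∩ C n b) N := by
  by_contra! hcon
  obtain ⟨L, hLM, hL, hconv⟩ := exists_infinite_forall_of_almost_hereditary
    (P := fun n N => n ∈ M → ∃ X ∈ F, ∃ b, ConvergesOn C (X ∩ C n b) N)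
    (fun n N N' hN hdiff hn => by
      obtain ⟨X, hX, b, hXb⟩ := hN hn
      exact ⟨X, hX, b, hXb.of_finite_diff hdiff⟩)
    hM
    (fun n N hNM hN => by
      by_cases hn : n ∈ M
      · obtain ⟨X, hX, b, hXb⟩ := hcon n hn N hNM hN
        obtain ⟨N', hN'N, hN', hconv⟩ := not_nowhereConvergesOn.1 hXb
        exact ⟨N', hN'N, hN', fun _ => ⟨X, hX, b, hconv⟩⟩
      · exact ⟨N, subset_rfl, hN, fun h => absurd h hn⟩)
  have hfin : (⋃ X ∈ F, ⋃ b, {n ∈ L | ConvergesOn C (X ∩ C n b) L}).Finite :=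
    hF.biUnion fun X hX => Set.finite_iUnion fun b =>
      ((h X hX).mono hLM).finite_setOf_convergesOn_inter b
  refine hL (hfin.subset fun n hn => ?_)
  obtain ⟨X, hX, b, hXb⟩ := hconv n (hLM hn)
  exact Set.mem_biUnion hX (Set.mem_iUnion.2 ⟨b, hn, hXb⟩)

theorem NowhereConvergesOn.exists_booleanIndependent (h : NowhereConvergesOn C Set.univ M)
    (hM : M.Infinite) : ∃ φ : ℕ → ℕ, StrictMono φ ∧ BooleanIndependent fun i => C (φ i) := by
  -- A state is the finite family of Boolean combinations built so far, together with an infinite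
  -- set of indices along which no subsequence converges on any of them.
  let State := {p : Set (Set S) × Set ℕ //
    p.1.Finite ∧ p.2.Infinite ∧ ∀ X ∈ p.1, NowhereConvergesOn C X p.2}
  have hstep : ∀ p : State, ∃ n ∈ p.1.2, ∃ q : State,
      q.1.2 ⊆ p.1.2 ∩ Set.Ioi n ∧ ∀ X ∈ p.1.1, ∀ b, X ∩ C n b ∈ q.1.1 := by
    rintro ⟨⟨F, M⟩, hF, hM, hFM⟩
    obtain ⟨n, hn, N, hNM, hN, hsplit⟩ := exists_forall_nowhereConvergesOn_inter hF hM hFM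
    refine ⟨n, hn, ⟨(Set.image2 (fun X b => X ∩ C n b) F Set.univ, N ∩ Set.Ioi n),
      hF.image2 _ Set.finite_univ, ?_, ?_⟩, Set.inter_subset_inter_left _ hNM,
      fun X hX b => Set.mem_image2_of_mem hX trivial⟩
    · simpa only [Set.sdiff_eq, Set.compl_Iic] using hN.sdiff (Set.finite_Iic n)
    · rintro _ ⟨X, hX, b, -, rfl⟩
      exact (hsplit X hX b).mono Set.inter_subset_left
  choose pick hpick next hnext_sub hnext_mem using hstep
  let state (k : ℕ) : State := Nat.rec
    ⟨({Set.univ}, M), Set.finite_singleton _, hM, by rintro _ rfl; exact h⟩ (fun _ => next) k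
  refine ⟨fun k => pick (state k), strictMono_nat_of_lt_succ fun k =>
    (hnext_sub (state k) (hpick (state (k + 1)))).2, fun r e => ?_⟩
  have hcomb : ∃ X ∈ (state r).1.1, X ⊆ ⋂ i : Fin r, C (pick (state i)) (e i) := by
    induction r with
    | zero => exact ⟨Set.univ, rfl, by simp⟩
    | succ r ih =>
      obtain ⟨X, hX, hXsub⟩ := ih fun i => e i.castSucc
      refine ⟨_, hnext_mem (state r) X hX (e (Fin.last r)), fun s hs => Set.mem_iInter.2 ?_⟩
      exact Fin.lastCases hs.2 fun i => Set.mem_iInter.1 (hXsub hs.1) i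
  obtain ⟨X, hX, hXsub⟩ := hcomb
  exact (((state r).2.2.2 X hX).nonempty (state r).2.2.1).mono hXsub

theorem exists_booleanIndependent_or_forall_convergesOn {ι : Type*} [Countable ι]
    (C : ι → ℕ → Bool → Set S) :
    (∃ k, ∃ φ : ℕ → ℕ, StrictMono φ ∧ BooleanIndependent fun i => C k (φ i)) ∨
      ∃ L : Set ℕ, L.Infinite ∧ ∀ k, ConvergesOn (C k) Set.univ L := by
  by_cases h : ∃ k M, M.Infinite ∧ NowhereConvergesOn (C k) Set.univ M
  · obtain ⟨k, M, hM, hkM⟩ := h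
    exact Or.inl ⟨k, hkM.exists_booleanIndependent hM⟩
  · right
    obtain ⟨L, -, hL⟩ := exists_infinite_forall_of_almost_hereditary
      (P := fun k M => ConvergesOn (C k) Set.univ M) (fun k M N => ConvergesOn.of_finite_diff)
      Set.infinite_univ fun k M _ hM => not_nowhereConvergesOn.1 fun hkM => h ⟨k, M, hM, hkM⟩
    exact ⟨L, hL⟩

end Combinatorics

theorem exists_tendsto_of_finite_visits_to_balls {Y ι : Type*} [MetricSpace Y] [ProperSpace Y]
    {a : ℕ → Y} (ha : Bornology.IsBounded (Set.range a)) {d : ι → Y} (hd : DenseRange d)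
    {c : ℝ} (hc : 0 < c)
    (h : ∀ w : Bool → ι, ∃ b,
      {n | a n ∈ Metric.ball (d (w b)) (c * dist (d (w true)) (d (w false)))}.Finite) :
    ∃ z, Tendsto a atTop (𝓝 z) := by
  have hmem : ∀ n, a n ∈ closure (Set.range a) := fun n => subset_closure ⟨n, rfl⟩
  obtain ⟨x, -, hx⟩ :=
    ha.isCompact_closure.exists_mapClusterPt_of_frequently (Frequently.of_forall (f := atTop) hmem)
  refine ⟨x, ha.isCompact_closure.tendsto_nhds_of_unique_mapClusterPt
    (Eventually.of_forall hmem) fun y _ hy => ?_⟩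
  by_contra hne
  let z : Bool → Y := fun b => cond b x y
  have hz : ∀ b, MapClusterPt (z b) atTop a := Bool.rec hy hx
  have hopen : IsOpen {p : Bool → Y | ∀ b, dist (z b) (p b) < c * dist (p true) (p false)} := by
    simp only [Set.ofPred_forall]
    exact isOpen_iInter_of_finite fun b => isOpen_lt (by fun_prop) (by fun_prop)
  obtain ⟨w, hw⟩ := (DenseRange.piMap fun _ : Bool => hd).exists_mem_open hopen
    ⟨z, fun b => by simpa [z] using mul_pos hc (dist_pos.2 (Ne.symm hne))⟩
  obtain ⟨b, hb⟩ := h w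
  exact Nat.frequently_atTop_iff_infinite.1
    ((hz b).frequently (Metric.isOpen_ball.mem_nhds (hw b))) hb

section Signs

variable {ι : Type*} [Fintype ι]

theorem exists_signs_sum_abs_le_norm {E : Type*} [SeminormedAddCommGroup E] (L : E →+ ℝ)
    (hL : ∀ z, L z ≤ ‖z‖) (t : ι → E) :
    ∃ ε : ι → Bool, ∑ i, |L (t i)| ≤ ‖∑ i, if ε i then t i else -t i‖ := by
  refine ⟨fun i => decide (0 ≤ L (t i)), le_of_eq_of_le ?_ (hL _)⟩
  rw [map_sum]
  refine Finset.sum_congr rfl fun i _ => ?_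
  by_cases hi : 0 ≤ L (t i)
  · simp [hi, abs_of_nonneg hi]
  · simp [hi, abs_of_neg (not_le.1 hi)]

theorem norm_le_abs_re_add_abs_im {𝕜 : Type*} [RCLike 𝕜] (z : 𝕜) :
    ‖z‖ ≤ |RCLike.re z| + |RCLike.im z| := by
  refine le_of_sq_le_sq ?_ (by positivity)
  rw [RCLike.norm_sq_eq_def, add_sq, sq_abs, sq_abs]
  linarith [mul_nonneg (abs_nonneg (RCLike.re z)) (abs_nonneg (RCLike.im z))]

theorem exists_signs_sum_norm_le {𝕜 : Type*} [RCLike 𝕜] (t : ι → 𝕜) :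
    ∃ ε : ι → Bool, ∑ i, ‖t i‖ ≤ 2 * ‖∑ i, if ε i then t i else -t i‖ := by
  have hsum : ∑ i, ‖t i‖ ≤ ∑ i, |RCLike.re (t i)| + ∑ i, |RCLike.im (t i)| := by
    rw [← Finset.sum_add_distrib]
    exact Finset.sum_le_sum fun i _ => norm_le_abs_re_add_abs_im (t i)
  rcases le_total (∑ i, |RCLike.im (t i)|) (∑ i, |RCLike.re (t i)|) with h | h
  · obtain ⟨ε, hε⟩ := exists_signs_sum_abs_le_norm RCLike.re RCLike.re_le_norm t
    exact ⟨ε, by linarith⟩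
  · obtain ⟨ε, hε⟩ := exists_signs_sum_abs_le_norm RCLike.im RCLike.im_le_norm t
    exact ⟨ε, by linarith⟩

end Signs

section Rosenthal

variable {𝕜 : Type*} [RCLike 𝕜] {S : Type*}

/-- The pair of sets on which a function takes values in two discs with centres `w true` and
`w false`. One eighth of the distance as radius keeps the discs so far apart that Boolean
independence survives as an `ℓ¹` lower estimate. -/
def discPair (f : S → 𝕜) (w : Bool → 𝕜) (b : Bool) : Set S :=
  {s | f s ∈ Metric.ball (w b) (8⁻¹ * dist (w true) (w false))}

theorem norm_sub_sub_signed_le_of_mem_discPair {f : S → 𝕜} {w : Bool → 𝕜} {b : Bool} {s s' : S}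
    (hs : s ∈ discPair f w b) (hs' : s' ∈ discPair f w !b) :
    ‖f s - f s' - (if b then w true - w false else -(w true - w false))‖ ≤
      ‖w true - w false‖ / 4 := by
  have hsign : f s - f s' - (if b then w true - w false else -(w true - w false)) =
      (f s - w b) - (f s' - w !b) := by
    cases b <;> simp only [Bool.not_true, Bool.not_false, Bool.false_eq_true, ↓reduceIte] <;> ring
  simp only [discPair, Set.mem_ofPred_eq, mem_ball_iff_norm, dist_eq_norm] at hs hs'
  rw [hsign]
  linarith [norm_sub_le (f s - w b) (f s' - w !b)]

theorem exists_mul_sum_norm_le_norm_sum {ι : Type*} [Fintype ι] {f : ι → S → 𝕜} {w : Bool → 𝕜}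
    (h : ∀ e : ι → Bool, (⋂ i, discPair (f i) w (e i)).Nonempty) (t : ι → 𝕜) :
    ∃ s, ‖w true - w false‖ / 8 * ∑ i, ‖t i‖ ≤ ‖∑ i, t i * f i s‖ := by
  obtain ⟨ε, hε⟩ := exists_signs_sum_norm_le t
  obtain ⟨s, hs⟩ := h ε
  obtain ⟨s', hs'⟩ := h fun i => !ε i
  rw [Set.mem_iInter] at hs hs'
  set δ := w true - w false
  set err : ι → 𝕜 := fun i => f i s - f i s' - (if ε i then δ else -δ)
  have hdecomp : (∑ i, if ε i then t i else -t i) * δ =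
      ∑ i, t i * f i s - ∑ i, t i * f i s' - ∑ i, t i * err i := by
    rw [Finset.sum_mul, ← Finset.sum_sub_distrib, ← Finset.sum_sub_distrib]
    refine Finset.sum_congr rfl fun i _ => ?_
    simp only [err]
    split_ifs <;> ring
  have herr : ‖∑ i, t i * err i‖ ≤ ‖δ‖ / 4 * ∑ i, ‖t i‖ := by
    rw [Finset.mul_sum]
    refine norm_sum_le_of_le _ fun i _ => ?_
    rw [norm_mul, mul_comm]
    gcongr
    exact norm_sub_sub_signed_le_of_mem_discPair (hs i) (hs' i)
  have hmain : ‖δ‖ / 4 * ∑ i, ‖t i‖ ≤ ‖∑ i, t i * f i s‖ + ‖∑ i, t i * f i s'‖ := by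
    have hnorm := congrArg norm hdecomp
    rw [norm_mul] at hnorm
    have hsub := norm_sub_le (∑ i, t i * f i s - ∑ i, t i * f i s') (∑ i, t i * err i)
    have hsub' := norm_sub_le (∑ i, t i * f i s) (∑ i, t i * f i s')
    linarith [mul_le_mul_of_nonneg_right hε (norm_nonneg δ)]
  rcases le_total ‖∑ i, t i * f i s‖ ‖∑ i, t i * f i s'‖ with hle | hle
  · exact ⟨s', by linarith⟩
  · exact ⟨s, by linarith⟩

theorem exists_tendsto_or_l1_lower_bound {f : ℕ → S → 𝕜}
    (hf : ∀ s, Bornology.IsBounded (Set.range fun n => f n s)) :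
    (∃ φ : ℕ → ℕ, StrictMono φ ∧ ∀ s, ∃ z, Tendsto (fun n => f (φ n) s) atTop (𝓝 z)) ∨
      ∃ φ : ℕ → ℕ, StrictMono φ ∧ ∃ B > 0, ∀ (r : ℕ) (t : Fin r → 𝕜),
        ∃ s, B * ∑ i, ‖t i‖ ≤ ‖∑ i, t i * f (φ i) s‖ := by
  let d := TopologicalSpace.denseSeq 𝕜
  rcases exists_booleanIndependent_or_forall_convergesOn
    fun (w : Bool → ℕ) n => discPair (f n) (d ∘ w) with ⟨w, φ, hφ, hind⟩ | ⟨L, hL, hconv⟩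
  · right
    refine ⟨φ, hφ, ‖d (w true) - d (w false)‖ / 8, ?_, fun r =>
      exists_mul_sum_norm_le_norm_sum (f := fun i : Fin r => f (φ i)) (w := d ∘ w) (hind r)⟩
    obtain ⟨s, hs⟩ := hind 1 fun _ => true
    have hradius := Metric.pos_of_mem_ball (Set.mem_iInter.1 hs 0)
    simp only [Function.comp_apply, dist_eq_norm] at hradius
    linarith
  · left
    obtain ⟨φ, hφ, hφL⟩ :=
      extraction_of_frequently_atTop (Nat.frequently_atTop_iff_infinite.2 hL)
    refine ⟨φ, hφ, fun s => exists_tendsto_of_finite_visits_to_balls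
      ((hf s).subset (Set.range_comp_subset_range φ fun n => f n s))
      (TopologicalSpace.denseRange_denseSeq 𝕜) (c := 8⁻¹) (by norm_num) fun w => ?_⟩
    obtain ⟨b, hb⟩ := hconv w s trivial
    exact ⟨b, (hb.preimage hφ.injective.injOn).subset fun n hn => ⟨hφL n, hn⟩⟩

end Rosenthal

/-- The sequence `x` is equivalent to the unit vector basis of `ℓ¹`. -/
def IsEquivL1Basis (𝕜 : Type*) {E : Type*} [NormedField 𝕜] [SeminormedAddCommGroup E]
    [NormedSpace 𝕜 E] (x : ℕ → E) : Prop :=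
  ∃ A B : ℝ, 0 < A ∧ 0 < B ∧ ∀ (r : ℕ) (t : Fin r → 𝕜),
    ‖∑ i, t i • x i‖ ≤ A * ∑ i, ‖t i‖ ∧ B * ∑ i, ‖t i‖ ≤ ‖∑ i, t i • x i‖

theorem norm_sum_smul_le_mul_sum_norm {𝕜 E ι : Type*} [NormedField 𝕜] [SeminormedAddCommGroup E]
    [NormedSpace 𝕜 E] [Fintype ι] {x : ι → E} {A : ℝ} (hx : ∀ i, ‖x i‖ ≤ A) (t : ι → 𝕜) :
    ‖∑ i, t i • x i‖ ≤ A * ∑ i, ‖t i‖ := by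
  rw [Finset.mul_sum]
  refine norm_sum_le_of_le _ fun i _ => ?_
  rw [norm_smul, mul_comm]
  gcongr
  exact hx i

theorem exists_tendsto_apply_of_mem_nhds_zero {𝕜 E F α : Type*} [NontriviallyNormedField 𝕜]
    [AddCommGroup E] [Module 𝕜 E] [TopologicalSpace E] [ContinuousSMul 𝕜 E]
    [AddCommGroup F] [Module 𝕜 F] [TopologicalSpace F] [ContinuousConstSMul 𝕜 F]
    {l : Filter α} {f : α → E →ₗ[𝕜] F} {U : Set E} (hU : U ∈ 𝓝 0)
    (h : ∀ x ∈ U, ∃ y, Tendsto (fun a => f a x) l (𝓝 y)) (x : E) :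
    ∃ y, Tendsto (fun a => f a x) l (𝓝 y) := by
  have habsorb : Absorbent 𝕜 U := absorbent_nhds_zero hU
  obtain ⟨c, hcx, hc⟩ := ((habsorb x).eventually_nhdsNE_zero.and eventually_mem_nhdsWithin).exists
  obtain ⟨y, hy⟩ := h (c • x) (hcx (Set.mem_singleton x))
  refine ⟨c⁻¹ • y, (hy.const_smul c⁻¹).congr fun a => ?_⟩
  rw [map_smul, inv_smul_smul₀ hc]

section Dual

variable {𝕜 : Type*} [RCLike 𝕜] {X : Type*} [SeminormedAddCommGroup X] [NormedSpace 𝕜 X]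

theorem exists_weakStar_tendsto_or_isEquivL1Basis {f : ℕ → X →L[𝕜] 𝕜}
    (hf : Bornology.IsBounded (Set.range f)) :
    ∃ φ : ℕ → ℕ, StrictMono φ ∧ ((∃ g : X →L[𝕜] 𝕜,
      ∀ x, Tendsto (fun n => f (φ n) x) atTop (𝓝 (g x))) ∨ IsEquivL1Basis 𝕜 (f ∘ φ)) := by
  obtain ⟨A, hA, hfA⟩ := hf.exists_pos_norm_le
  rw [Set.forall_mem_range] at hfA
  have hbdd : ∀ x : Metric.closedBall (0 : X) 1,
      Bornology.IsBounded (Set.range fun n => f n x) := fun x =>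
    isBounded_iff_forall_norm_le.2 ⟨A * ‖x.1‖, by
      rintro _ ⟨n, rfl⟩
      exact (f n).le_of_opNorm_le (hfA n) x⟩
  rcases exists_tendsto_or_l1_lower_bound hbdd with ⟨φ, hφ, hlim⟩ | ⟨φ, hφ, B, hB, hlower⟩
  · refine ⟨φ, hφ, Or.inl ?_⟩
    choose z hz using exists_tendsto_apply_of_mem_nhds_zero
      (f := fun n => (f (φ n)).toLinearMap) (Metric.closedBall_mem_nhds (0 : X) one_pos)
      fun x hx => hlim ⟨x, hx⟩
    exact ⟨ContinuousLinearMap.ofTendstoOfBoundedRange z (f ∘ φ) (tendsto_pi_nhds.2 hz)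
      (hf.subset (Set.range_comp_subset_range φ f)), hz⟩
  · refine ⟨φ, hφ, Or.inr ⟨A, B, hA, hB, fun r t => ⟨?_, ?_⟩⟩⟩
    · exact norm_sum_smul_le_mul_sum_norm (fun i : Fin r => hfA (φ i)) t
    · obtain ⟨x, hx⟩ := hlower r t
      refine hx.trans ?_
      simpa using (∑ i, t i • (f ∘ φ) i).unit_le_opNorm x (mem_closedBall_zero_iff.1 x.2)

theorem dual_finiteDimensional_general
    (hl1 : ¬ ∃ x' : ℕ → X →L[𝕜] 𝕜, IsEquivL1Basis 𝕜 x')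
    (hweak : ∀ (f : ℕ → X →L[𝕜] 𝕜) (g : X →L[𝕜] 𝕜),
      (∀ x : X, Tendsto (fun n => f n x) atTop (𝓝 (g x))) →
        ∃ h : X →L[𝕜] 𝕜, Tendsto f atTop (𝓝 h)) :
    FiniteDimensional 𝕜 (X →L[𝕜] 𝕜) := by
  suffices IsSeqCompact (Metric.closedBall (0 : X →L[𝕜] 𝕜) 1) from
    .of_totallyBounded_nhds_zero 𝕜 (Metric.closedBall_mem_nhds 0 one_pos) this.totallyBounded
  intro f hf
  obtain ⟨φ, hφ, ⟨g, hg⟩ | hequiv⟩ := exists_weakStar_tendsto_or_isEquivL1Basis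
    (Metric.isBounded_closedBall.subset (Set.range_subset_iff.2 hf))
  · obtain ⟨h, hh⟩ := hweak (f ∘ φ) g hg
    exact ⟨h, Metric.isClosed_closedBall.mem_of_tendsto hh (Eventually.of_forall fun n => hf (φ n)),
      φ, hφ, hh⟩
  · exact absurd ⟨f ∘ φ, hequiv⟩ hl1

end Dual

/-- If no sequence in the dual `X'` of a Banach space `X` is equivalent to the
unit vector basis of `ℓ¹`, and every weak*-convergent sequence in `X'` is norm
convergent, then `X'` is finite-dimensional. -/
theorem dual_finiteDimensional {𝕜 : Type*} [RCLike 𝕜] {X : Type*}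
    [NormedAddCommGroup X] [NormedSpace 𝕜 X] [CompleteSpace X]
    (h1 : ¬ ∃ (x' : ℕ → X →L[𝕜] 𝕜) (A B : ℝ), 0 < A ∧ 0 < B ∧
      ∀ (r : ℕ) (t : Fin r → 𝕜),
        ‖∑ i, t i • x' i‖ ≤ A * ∑ i, ‖t i‖ ∧
          B * ∑ i, ‖t i‖ ≤ ‖∑ i, t i • x' i‖)
    (h2 : ∀ (f : ℕ → X →L[𝕜] 𝕜) (g : X →L[𝕜] 𝕜),
      (∀ x : X, Tendsto (fun n => f n x) atTop (nhds (g x))) →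
        ∃ h : X →L[𝕜] 𝕜, Tendsto f atTop (nhds h)) :
    FiniteDimensional 𝕜 (X →L[𝕜] 𝕜) :=
  dual_finiteDimensional_general h1 h2
end

section
/- Let $X$ be a Banach space and $(x'_n)$ a bounded sequence in $X'$ such that $\varphi((y'_n)) > 0$ for every block sequence $(y'_n)$ of $(x'_n)$, where $\varphi((y'_n)) := \sup_{\|x\|=1} \limsup_n |y'_n(x)|$. Then there exist $\delta > 0$ and a block sequence $(y'_n)$ of $(x'_n)$ such that $\varphi((z'_n)) = \delta$ for every sequence $(z'_n)$ obtained from $(y'_n)$ by blocking. -/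
open Filter

/-- `y'` is obtained from `x'` by blocking: there are finite nonempty sets
`A₁ ≤ A₂ ≤ ⋯` of indices (each element of `Aₙ` below each element of `Aₙ₊₁`)
and scalars `(a_k)` with `∑_{k ∈ Aₙ} |a_k| = 1` such that
`y'ₙ = ∑_{k ∈ Aₙ} a_k x'_k`. -/
def IsBlockSeq {𝕜 : Type*} [RCLike 𝕜] {X : Type*} [NormedAddCommGroup X]
    [NormedSpace 𝕜 X] (x' y' : ℕ → X →L[𝕜] 𝕜) : Prop :=
  ∃ (A : ℕ → Finset ℕ) (a : ℕ → 𝕜),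
    (∀ n, (A n).Nonempty) ∧
    (∀ n, ∀ k ∈ A n, ∀ l ∈ A (n + 1), k < l) ∧
    (∀ n, ∑ k ∈ A n, ‖a k‖ = 1) ∧
    (∀ n, y' n = ∑ k ∈ A n, a k • x' k)

/-- `φ((y'ₙ)) = sup_{‖x‖=1} limsup_n |y'ₙ(x)|`. -/
noncomputable def phi {𝕜 : Type*} [RCLike 𝕜] {X : Type*} [NormedAddCommGroup X]
    [NormedSpace 𝕜 X] (y' : ℕ → X →L[𝕜] 𝕜) : ℝ :=
  ⨆ x : {x : X // ‖x‖ = 1}, limsup (fun n => ‖y' n x.1‖) atTop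

/-! Call `y` an *almost block sequence* of `x` if `y` is, from some index on, obtained from `x` by
blocking. This is a preorder, `phi` decreases along it on bounded sequences, and every chain in it
has an upper bound: a diagonal sequence whose `n`-th term is a term of the `n`-th sequence so far
out that it starts to the right of the previous terms in each of the first `n` sequences. An
ordering principle of Brezis–Browder type then yields a sequence beyond which `phi` is constant,
and a tail of it is a genuine block sequence. -/

theorem exists_rel_forall_rel_apply_eq {α : Type*} (r : α → α → Prop) [Std.Refl r] [IsTrans α r]
    {φ : α → ℝ} {x : α} (hφ : ∀ y z, r x y → r y z → φ z ≤ φ y) (hbdd : BddBelow (Set.range φ))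
    (hchain : ∀ u : ℕ → α, (∀ n, r (u n) (u (n + 1))) → ∃ y, ∀ n, r (u n) y) :
    ∃ y, r x y ∧ ∀ z, r y z → φ z = φ y := by
  have exists_almost_minimal (n : ℕ) (y : α) :
      ∃ w, r y w ∧ ∀ z, r y z → φ w ≤ φ z + 1 / ((n : ℝ) + 1) := by
    have hbdd' : BddBelow (φ '' {z | r y z}) := hbdd.mono (Set.image_subset_range _ _)
    obtain ⟨_, ⟨w, hyw, rfl⟩, hw⟩ := exists_lt_of_csInf_lt (Set.Nonempty.image φ ⟨y, refl_of r y⟩)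
      (lt_add_of_pos_right (sInf (φ '' {z | r y z})) (Nat.one_div_pos_of_nat (n := n)))
    refine ⟨w, hyw, fun z hyz ↦ hw.le.trans ?_⟩
    gcongr
    exact csInf_le hbdd' ⟨z, hyz, rfl⟩
  choose next rel_next next_le using exists_almost_minimal
  let u : ℕ → α := fun n ↦ Nat.rec x next n
  have hu (n : ℕ) : r (u n) (u (n + 1)) := rel_next n (u n)
  obtain ⟨y, hy⟩ := hchain u hu
  refine ⟨y, hy 0, fun z hyz ↦ (hφ y z (hy 0) hyz).antisymm ?_⟩
  have hxu (n : ℕ) : r x (u n) := Nat.rel_of_forall_rel_succ_of_le r hu n.zero_le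
  have hle (n : ℕ) : φ y ≤ φ z + 1 / ((n : ℝ) + 1) :=
    (hφ _ _ (hxu (n + 1)) (hy (n + 1))).trans (next_le n (u n) z (trans_of r (hy n) hyz))
  refine le_of_forall_pos_le_add fun ε hε ↦ ?_
  obtain ⟨n, hn⟩ := exists_nat_one_div_lt hε
  exact (hle n).trans (by gcongr)

section WeightedCombinations

variable (𝕜 : Type*) [NormedDivisionRing 𝕜] {ι κ E : Type*}

/-- The linear combinations `∑ cᵢ • xᵢ` with finitely many nonzero coefficients, all at indices in
`s`, and with `∑ ‖cᵢ‖ = t`. -/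
def weightedCombinations [AddCommMonoid E] [Module 𝕜 E] (x : ι → E) (s : Set ι) (t : ℝ) : Set E :=
  {v | ∃ c ∈ Finsupp.supported 𝕜 𝕜 s,
    c.sum (fun _ a ↦ ‖a‖) = t ∧ Finsupp.linearCombination 𝕜 x c = v}

namespace weightedCombinations

variable {𝕜}

section Module

variable [AddCommMonoid E] [Module 𝕜 E] {x : ι → E} {y : κ → E} {s s' : Set ι} {t t' : ℝ} {v w : E}

theorem mono (hs : s ⊆ s') : weightedCombinations 𝕜 x s t ⊆ weightedCombinations 𝕜 x s' t := by
  rintro _ ⟨c, hc, rfl, rfl⟩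
  exact ⟨c, Finsupp.supported_mono hs hc, rfl, rfl⟩

theorem zero_mem : (0 : E) ∈ weightedCombinations 𝕜 x s 0 :=
  ⟨0, Submodule.zero_mem _, Finsupp.sum_zero_index, map_zero _⟩

theorem self_mem (i : ι) : x i ∈ weightedCombinations 𝕜 x {i} 1 :=
  ⟨Finsupp.single i 1, Finsupp.single_mem_supported 𝕜 1 rfl, by simp, by simp⟩

theorem smul_mem (a : 𝕜) (hv : v ∈ weightedCombinations 𝕜 x s t) :
    a • v ∈ weightedCombinations 𝕜 x s (‖a‖ * t) := by
  obtain ⟨c, hc, rfl, rfl⟩ := hv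
  refine ⟨a • c, Submodule.smul_mem _ a hc, ?_, map_smul _ a c⟩
  rw [Finsupp.sum_smul_index fun _ ↦ norm_zero, Finsupp.mul_sum]
  simp only [norm_mul]

theorem add_mem (hs : Disjoint s s') (hv : v ∈ weightedCombinations 𝕜 x s t)
    (hw : w ∈ weightedCombinations 𝕜 x s' t') :
    v + w ∈ weightedCombinations 𝕜 x (s ∪ s') (t + t') := by
  classical
  obtain ⟨c, hc, rfl, rfl⟩ := hv
  obtain ⟨d, hd, rfl, rfl⟩ := hw
  refine ⟨c + d, Submodule.add_mem _ (Finsupp.supported_mono Set.subset_union_left hc)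
    (Finsupp.supported_mono Set.subset_union_right hd), ?_, map_add _ c d⟩
  exact Finsupp.sum_add_index_of_disjoint (Finset.disjoint_coe.1 (hs.mono hc hd)) _

theorem sum_mem {F : Finset κ} {S : κ → Set ι} {τ : κ → ℝ}
    (hS : (F : Set κ).PairwiseDisjoint S)
    (hy : ∀ k ∈ F, y k ∈ weightedCombinations 𝕜 x (S k) (τ k)) :
    ∑ k ∈ F, y k ∈ weightedCombinations 𝕜 x (⋃ k ∈ F, S k) (∑ k ∈ F, τ k) := by
  classical
  induction F using Finset.induction_on with
  | empty => simpa using zero_mem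
  | insert k F hk ih =>
    rw [Finset.sum_insert hk, Finset.sum_insert hk, Finset.set_biUnion_insert]
    rw [Finset.coe_insert, Set.pairwiseDisjoint_insert_of_notMem (by simpa)] at hS
    rw [Finset.forall_mem_insert] at hy
    exact add_mem (Set.disjoint_iUnion₂_right.2 hS.2) hy.1 (ih hS.1 hy.2)

theorem sum_smul_mem (F : Finset ι) (c : ι → 𝕜) :
    ∑ i ∈ F, c i • x i ∈ weightedCombinations 𝕜 x F (∑ i ∈ F, ‖c i‖) := by
  have hmem := sum_mem (F := F) (fun i _ j _ hij ↦ Set.disjoint_singleton.2 hij)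
    fun i _ ↦ smul_mem (c i) (self_mem (x := x) i)
  simp only [mul_one] at hmem
  exact mono (Set.iUnion₂_subset fun i hi ↦ Set.singleton_subset_iff.2 hi) hmem

theorem mem_trans {s : Set κ} {S : κ → Set ι} (hS : s.PairwiseDisjoint S)
    (hy : ∀ k ∈ s, y k ∈ weightedCombinations 𝕜 x (S k) 1)
    (hv : v ∈ weightedCombinations 𝕜 y s t) :
    v ∈ weightedCombinations 𝕜 x (⋃ k ∈ s, S k) t := by
  obtain ⟨c, hc, rfl, rfl⟩ := hv
  have hmem := sum_mem (hS.subset hc) fun k hk ↦ smul_mem (c k) (hy k (hc hk))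
  simp only [mul_one] at hmem
  exact mono (Set.biUnion_subset_biUnion_left hc) hmem

theorem nonempty_of_mem (hv : v ∈ weightedCombinations 𝕜 x s 1) : s.Nonempty := by
  obtain ⟨c, hc, h1, -⟩ := hv
  rw [← Set.nonempty_coe_sort, ← not_isEmpty_iff]
  intro hs
  have hc0 : c = 0 := by
    rwa [Set.isEmpty_coe_sort.1 hs, Finsupp.supported_empty, Submodule.mem_bot] at hc
  simp [hc0] at h1

theorem eventually_mem_inter_Iio {x : ℕ → E} {s : Set ℕ}
    (hv : v ∈ weightedCombinations 𝕜 x s t) :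
    ∀ᶠ b in atTop, v ∈ weightedCombinations 𝕜 x (s ∩ Set.Iio b) t := by
  obtain ⟨c, hc, ht, rfl⟩ := hv
  obtain ⟨b₀, hb₀⟩ := c.support.exists_nat_subset_range
  filter_upwards [eventually_ge_atTop b₀] with b hb
  exact ⟨c, fun i hi ↦ ⟨hc hi, (Finset.mem_range.1 (hb₀ hi)).trans_le hb⟩, ht, rfl⟩

end Module

theorem seminorm_le [AddCommGroup E] [Module 𝕜 E] (q : Seminorm 𝕜 E) {x : ι → E} {s : Set ι}
    {t b : ℝ} {v : E} (hv : v ∈ weightedCombinations 𝕜 x s t) (hx : ∀ i ∈ s, q (x i) ≤ b) :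
    q v ≤ t * b := by
  obtain ⟨c, hc, rfl, rfl⟩ := hv
  calc q (∑ i ∈ c.support, c i • x i)
      ≤ ∑ i ∈ c.support, q (c i • x i) :=
        Finset.le_sum_of_subadditive q (map_zero q).le (map_add_le_add q) _ _
    _ = ∑ i ∈ c.support, ‖c i‖ * q (x i) := by simp only [map_smul_eq_mul]
    _ ≤ ∑ i ∈ c.support, ‖c i‖ * b := by gcongr with i hi; exact hx i (hc hi)
    _ = c.sum (fun _ a ↦ ‖a‖) * b := (Finset.sum_mul _ _ _).symm

end weightedCombinations

end WeightedCombinations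

section AlmostBlockSeq

variable (𝕜 : Type*) [NormedDivisionRing 𝕜] {E : Type*}

/-- `y` is, up to finitely many of its terms, obtained from `x` by blocking: the coefficients of
`yₙ` live in the interval `[pₙ, pₙ₊₁)`. -/
def IsAlmostBlockSeq [AddCommMonoid E] [Module 𝕜 E] (x y : ℕ → E) : Prop :=
  ∃ p : ℕ → ℕ, StrictMono p ∧
    ∀ᶠ n in atTop, y n ∈ weightedCombinations 𝕜 x (Set.Ico (p n) (p (n + 1))) 1

variable {𝕜}

namespace IsAlmostBlockSeq

section Module

variable [AddCommMonoid E] [Module 𝕜 E] {x y z : ℕ → E}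

variable (𝕜 x) in
theorem comp_strictMono {σ : ℕ → ℕ} (hσ : StrictMono σ) : IsAlmostBlockSeq 𝕜 x (x ∘ σ) :=
  ⟨σ, hσ, .of_forall fun n ↦ weightedCombinations.mono
    (Set.singleton_subset_iff.2 (Set.left_mem_Ico.2 (hσ n.lt_succ_self)))
    (weightedCombinations.self_mem (σ n))⟩

theorem trans (hxy : IsAlmostBlockSeq 𝕜 x y) (hyz : IsAlmostBlockSeq 𝕜 y z) :
    IsAlmostBlockSeq 𝕜 x z := by
  obtain ⟨p, hp, hy⟩ := hxy
  obtain ⟨q, hq, hz⟩ := hyz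
  refine ⟨p ∘ q, hp.comp hq, ?_⟩
  filter_upwards [hz, hq.tendsto_atTop.eventually_forall_ge_atTop hy] with n hzn hyn
  have hdisj := hp.monotone.pairwise_disjoint_on_Ico_succ.set_pairwise (Set.Ico (q n) (q (n + 1)))
  refine weightedCombinations.mono (Set.iUnion₂_subset fun k hk ↦ ?_)
    (weightedCombinations.mem_trans hdisj (fun k hk ↦ hyn k hk.1) hzn)
  exact Set.Ico_subset_Ico (hp.monotone hk.1) (hp.monotone hk.2)

instance : Std.Refl (IsAlmostBlockSeq 𝕜 : (ℕ → E) → (ℕ → E) → Prop) :=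
  ⟨fun x ↦ comp_strictMono 𝕜 x strictMono_id⟩

instance : IsTrans (ℕ → E) (IsAlmostBlockSeq 𝕜) :=
  ⟨fun _ _ _ ↦ trans⟩

theorem eventually_mem_Ici (h : IsAlmostBlockSeq 𝕜 x y) (a : ℕ) :
    ∀ᶠ n in atTop, y n ∈ weightedCombinations 𝕜 x (Set.Ici a) 1 := by
  obtain ⟨p, hp, hy⟩ := h
  filter_upwards [hy, hp.tendsto_atTop.eventually_ge_atTop a] with n hyn ha
  exact weightedCombinations.mono (fun i hi ↦ ha.trans hi.1) hyn

theorem exists_upper_bound {u : ℕ → ℕ → E} (hu : ∀ n, IsAlmostBlockSeq 𝕜 (u n) (u (n + 1))) :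
    ∃ y, ∀ n, IsAlmostBlockSeq 𝕜 (u n) y := by
  have exists_common_interval (n a : ℕ) : ∃ b v, ∀ k ∈ Set.Iic n,
      v ∈ weightedCombinations 𝕜 (u k) (Set.Ico a b) 1 := by
    have hev : ∀ k ∈ Set.Iic n,
        ∀ᶠ j in atTop, u n j ∈ weightedCombinations 𝕜 (u k) (Set.Ici a) 1 := fun k hk ↦
      (Nat.rel_of_forall_rel_succ_of_le (IsAlmostBlockSeq 𝕜) hu hk).eventually_mem_Ici a
    obtain ⟨j, hj⟩ := ((eventually_all_finite (Set.finite_Iic n)).2 hev).exists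
    obtain ⟨b, hb⟩ := ((eventually_all_finite (Set.finite_Iic n)).2 fun k hk ↦
      weightedCombinations.eventually_mem_inter_Iio (hj k hk)).exists
    exact ⟨b, u n j, hb⟩
  choose b v hv using exists_common_interval
  let a : ℕ → ℕ := fun n ↦ Nat.rec 0 b n
  have hmem (k n : ℕ) (hkn : k ≤ n) :
      v n (a n) ∈ weightedCombinations 𝕜 (u k) (Set.Ico (a n) (a (n + 1))) 1 := hv n (a n) k hkn
  have ha : StrictMono a := strictMono_nat_of_lt_succ fun n ↦
    Set.nonempty_Ico.1 (weightedCombinations.nonempty_of_mem (hmem 0 n n.zero_le))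
  exact ⟨fun n ↦ v n (a n), fun k ↦ ⟨a, ha, (eventually_ge_atTop k).mono (hmem k)⟩⟩

end Module

theorem eventually_seminorm_le [AddCommGroup E] [Module 𝕜 E] (q : Seminorm 𝕜 E) {x y : ℕ → E}
    {b : ℝ} (h : IsAlmostBlockSeq 𝕜 x y) (hx : ∀ᶠ n in atTop, q (x n) ≤ b) :
    ∀ᶠ n in atTop, q (y n) ≤ b := by
  obtain ⟨N, hN⟩ := eventually_atTop.1 hx
  filter_upwards [h.eventually_mem_Ici N] with n hn
  simpa using weightedCombinations.seminorm_le q hn hN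

end IsAlmostBlockSeq

end AlmostBlockSeq

section Dual

variable {𝕜 : Type*} [RCLike 𝕜] {X : Type*} [NormedAddCommGroup X] [NormedSpace 𝕜 X]
  {x y : ℕ → X →L[𝕜] 𝕜}

theorem IsBlockSeq.isAlmostBlockSeq (h : IsBlockSeq x y) : IsAlmostBlockSeq 𝕜 x y := by
  obtain ⟨A, a, hne, hlt, hsum, hy⟩ := h
  refine ⟨fun n ↦ (A n).min' (hne n), strictMono_nat_of_lt_succ fun n ↦
    hlt n _ (Finset.min'_mem _ _) _ (Finset.min'_mem _ _), .of_forall fun n ↦ ?_⟩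
  rw [hy, ← hsum n]
  refine weightedCombinations.mono (fun k hk ↦ ?_) (weightedCombinations.sum_smul_mem (A n) a)
  exact ⟨Finset.min'_le _ _ hk, hlt n k hk _ (Finset.min'_mem _ _)⟩

theorem isBlockSeq_of_mem_weightedCombinations {p : ℕ → ℕ} (hp : StrictMono p)
    (hy : ∀ n, y n ∈ weightedCombinations 𝕜 x (Set.Ico (p n) (p (n + 1))) 1) :
    IsBlockSeq x y := by
  choose c hc hsum hcomb using hy
  let a : ℕ → 𝕜 := fun k ↦ ∑ᶠ n, c n k
  have ha (n k : ℕ) (hk : k ∈ (c n).support) : a k = c n k := by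
    refine finsum_eq_single _ n fun m hmn ↦ Finsupp.notMem_support_iff.1 fun hkm ↦ ?_
    exact Set.disjoint_left.1 (hp.monotone.pairwise_disjoint_on_Ico_succ hmn) (hc m hkm) (hc n hk)
  refine ⟨fun n ↦ (c n).support, a, fun n ↦ ?_, fun n k hk l hl ↦ ?_, fun n ↦ ?_, fun n ↦ ?_⟩
  · rw [Finsupp.support_nonempty_iff]
    rintro h0
    simpa [h0] using hsum n
  · exact (hc n hk).2.trans_le (hc (n + 1) hl).1
  · exact (Finset.sum_congr rfl fun k hk ↦ by rw [ha n k hk]).trans (hsum n)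
  · rw [← hcomb n, Finsupp.linearCombination_apply]
    exact Finset.sum_congr rfl fun k hk ↦ by rw [ha n k hk]

theorem IsAlmostBlockSeq.exists_isBlockSeq_tail (h : IsAlmostBlockSeq 𝕜 x y) :
    ∃ N, IsBlockSeq x (y ∘ (· + N)) := by
  obtain ⟨p, hp, hy⟩ := h
  obtain ⟨N, hN⟩ := eventually_atTop.1 hy
  refine ⟨N, isBlockSeq_of_mem_weightedCombinations (hp.comp (strictMono_id.add_const N))
    fun n ↦ ?_⟩
  simpa [add_right_comm] using hN (n + N) (Nat.le_add_left N n)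

theorem phi_nonneg (x : ℕ → X →L[𝕜] 𝕜) : 0 ≤ phi x := by
  refine Real.iSup_nonneg fun u ↦ ?_
  rw [limsup_eq]
  refine Real.sInf_nonneg fun b hb ↦ ?_
  obtain ⟨n, hn⟩ := hb.exists
  exact (norm_nonneg _).trans hn

theorem IsAlmostBlockSeq.phi_le (h : IsAlmostBlockSeq 𝕜 x y)
    (hx : IsBoundedUnder (· ≤ ·) atTop (fun n ↦ ‖x n‖)) : phi y ≤ phi x := by
  obtain ⟨C, hC⟩ := hx
  have apply_le (u : {u : X // ‖u‖ = 1}) : ∀ᶠ n in atTop, ‖x n u‖ ≤ C :=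
    (eventually_map.1 hC).mono fun n hn ↦ ((x n).unit_le_opNorm u u.2.le).trans hn
  have cobdd (z : ℕ → X →L[𝕜] 𝕜) (u : X) :
      IsCoboundedUnder (· ≤ ·) atTop (fun n ↦ ‖z n u‖) :=
    (isBoundedUnder_of ⟨0, fun n ↦ norm_nonneg (z n u)⟩).isCoboundedUnder_le
  refine ciSup_mono ⟨C, ?_⟩ fun u ↦ le_of_forall_gt_imp_ge_of_dense fun b hb ↦ ?_
  · rintro _ ⟨u, rfl⟩
    exact limsup_le_of_le (cobdd x u) (apply_le u)
  · have hlt := eventually_lt_of_limsup_lt hb ⟨C, apply_le u⟩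
    let evalNorm : Seminorm 𝕜 (X →L[𝕜] 𝕜) :=
      (normSeminorm 𝕜 𝕜).comp (ContinuousLinearMap.apply 𝕜 𝕜 u.1).toLinearMap
    exact limsup_le_of_le (cobdd y u)
      (h.eventually_seminorm_le evalNorm (hlt.mono fun _ ↦ le_of_lt))

theorem exists_stable_block_sequence_general (x' : ℕ → X →L[𝕜] 𝕜) (hb : ∃ C : ℝ, ∀ n, ‖x' n‖ ≤ C) :
    ∃ y', IsBlockSeq x' y' ∧ ∀ z', IsBlockSeq y' z' → phi z' = phi y' := by
  obtain ⟨C, hC⟩ := hb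
  have phi_antitone (y z : ℕ → X →L[𝕜] 𝕜) (hxy : IsAlmostBlockSeq 𝕜 x' y)
      (hyz : IsAlmostBlockSeq 𝕜 y z) : phi z ≤ phi y :=
    hyz.phi_le ⟨C, hxy.eventually_seminorm_le (normSeminorm 𝕜 _) (.of_forall hC)⟩
  obtain ⟨y, hxy, hy⟩ := exists_rel_forall_rel_apply_eq (IsAlmostBlockSeq 𝕜) phi_antitone
    ⟨0, Set.forall_mem_range.2 phi_nonneg⟩ fun _ ↦ IsAlmostBlockSeq.exists_upper_bound
  obtain ⟨N, hN⟩ := hxy.exists_isBlockSeq_tail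
  have htail : IsAlmostBlockSeq 𝕜 y (y ∘ (· + N)) :=
    .comp_strictMono 𝕜 y (strictMono_id.add_const N)
  refine ⟨y ∘ (· + N), hN, fun z hz ↦ ?_⟩
  rw [hy z (htail.trans hz.isAlmostBlockSeq), hy _ htail]

end Dual

/-- If every block sequence `(y'ₙ)` of a bounded sequence `(x'ₙ)` in `X'` has
`φ((y'ₙ)) > 0`, then there are a `δ > 0` and a block sequence `(y'ₙ)` such that
`φ((z'ₙ)) = δ` for every sequence `(z'ₙ)` obtained from `(y'ₙ)` by blocking. -/
theorem exists_stable_block_sequence {𝕜 : Type*} [RCLike 𝕜] {X : Type*}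
    [NormedAddCommGroup X] [NormedSpace 𝕜 X] [CompleteSpace X]
    (x' : ℕ → X →L[𝕜] 𝕜) (hb : ∃ C : ℝ, ∀ n, ‖x' n‖ ≤ C)
    (h : ∀ y' : ℕ → X →L[𝕜] 𝕜, IsBlockSeq x' y' → 0 < phi y') :
    ∃ δ : ℝ, 0 < δ ∧ ∃ y' : ℕ → X →L[𝕜] 𝕜, IsBlockSeq x' y' ∧
      ∀ z' : ℕ → X →L[𝕜] 𝕜, IsBlockSeq y' z' → phi z' = δ := by
  obtain ⟨y', hy', hstable⟩ := exists_stable_block_sequence_general x' hb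
  exact ⟨phi y', h y' hy', y', hy', hstable⟩
end
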